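/- arXiv:2106.05821 — 4 statements merged into one kernel-verified Lean document; each statement's English description precedes it below -/
import Mathlib

section
/- Let G be a group containing a free subgroup F of finite index, let A and B be subgroups of G, and let S be a system of representatives of the double cosets AsB in G (i.e., the map s ↦ AsB is a bijection from S onto the set of (A,B)-double cosets of G). Then the sum over s ∈ S of the virtual reduced ranks of the subgroups A ∩ sBs⁻¹ satisfies ∑_{s∈S} r̄k(A ∩ sBs⁻¹) ≤ [G:F] · r̄k(A) · r̄k(B). -/
open scoped ENNReal

/-- The rank of a group `H` (as an element of `ℝ≥0∞`): the minimal cardinality of a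
finite generating set of `H`, or `⊤` if `H` is not finitely generated. -/
noncomputable def grank (H : Type*) [Group H] : ℝ≥0∞ :=
  sInf {x : ℝ≥0∞ | ∃ s : Finset H, Subgroup.closure (s : Set H) = ⊤ ∧ x = s.card}

/-- `r : ℝ≥0∞` is the virtual reduced rank of the group `H`: there is a finitely
generated free subgroup `K` of finite index in `H` such that
`r = max (0, rank K - 1) / [H : K]`.  (This value does not depend on the choice of `K`.) -/
def IsVirtRedRank (H : Type*) [Group H] (r : ℝ≥0∞) : Prop :=
  ∃ K : Subgroup H, K.FiniteIndex ∧ IsFreeGroup K ∧ Group.FG K ∧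
    r = (grank K - 1) / (K.index : ℝ≥0∞)

/-!
Let `Γ` be the Cayley graph of `G` with respect to a basis of `F`: it is a forest with `[G : F]`
components, on which `G` acts freely. Free groups are locally indicable, so by Burns–Hale `F` has a
left-invariant order, and this orders the edges of `Γ`, `G`-equivariantly and totally on each
component. For a subgroup `A`, call an edge essential if, in some `A`-invariant edge set with
finitely many `A`-orbits, each of its endpoints is joined to infinitely many vertices by paths
through smaller edges.

Let `A` be infinite and free, preserving the components of `Γ`, and let `T` be an `A`-invariant
subtree with finitely many orbits. As the edges of `T` are added in increasing order, the component
of a vertex becomes infinite at a certain critical edge. Send each vertex to its critical edge, and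
each inessential edge to the critical edge of an endpoint whose component was still finite when the
edge was added. The fibre over `c` consists of the vertices of a finite tree, one end of `c` among
them, and of the edges of that tree together with `c`: equally many vertices and edges. So `T` has
`|E(T)/A| - |V(T)/A|` orbits of essential edges, which is the reduced rank of `A` by the Euler
characteristic and does not depend on `T`. Passing to subgroups of finite index, one finds
`[G : F] * r̄k(A)` orbits of essential edges in `Γ` for arbitrary `A`.

Every edge essential for `A ∩ sBs⁻¹` is essential for `A`, and its translate by `s⁻¹` is essential
for `B`. Since `A ∩ sBs⁻¹`-orbits of edges, for all `s` in a system of representatives of the double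
cosets, inject into pairs of an `A`-orbit and a `B`-orbit, the inequality follows.
-/

namespace HannaNeumann

/-! ### Counting orbits -/

section Orbits

variable {A X Y P : Type*} [Group A] [MulAction A X] [MulAction A Y] [MulAction A P]
  {U W : Set X}

/-- `U` is stable under the action of `A`. -/
def IsSMulInvariant (A : Type*) {X : Type*} [SMul A X] (U : Set X) : Prop :=
  ∀ a : A, ∀ x ∈ U, a • x ∈ U

theorem isSMulInvariant_univ (A : Type*) {X : Type*} [SMul A X] :
    IsSMulInvariant A (Set.univ : Set X) := fun _ _ _ => Set.mem_univ _

theorem IsSMulInvariant.smul_mem_iff (hU : IsSMulInvariant A U) {a : A} {x : X} :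
    a • x ∈ U ↔ x ∈ U :=
  ⟨fun h => inv_smul_smul a x ▸ hU a⁻¹ _ h, hU a x⟩

theorem IsSMulInvariant.diff (hU : IsSMulInvariant A U) (hW : IsSMulInvariant A W) :
    IsSMulInvariant A (U \ W) :=
  fun a x hx => ⟨hU a x hx.1, fun h => hx.2 (hW.smul_mem_iff.mp h)⟩

/-- The number of orbits of `A` meeting `U`. -/
noncomputable def orbitCount (A : Type*) {X : Type*} [Group A] [MulAction A X] (U : Set X) : ℕ∞ :=
  (MulAction.orbit A '' U).encard

theorem orbitCount_ne_top_iff :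
    orbitCount A U ≠ ⊤ ↔ ∃ T ⊆ U, T.Finite ∧ ∀ x ∈ U, ∃ y ∈ T, x ∈ MulAction.orbit A y := by
  rw [orbitCount, Set.encard_ne_top_iff]
  constructor
  · intro hfin
    obtain ⟨T, hTU, hT⟩ := (Set.surjOn_image (MulAction.orbit A) U).exists_bijOn_subset
    refine ⟨T, hTU, hT.finite_iff_finite.mpr hfin, fun x hx => ?_⟩
    obtain ⟨y, hy, hyx⟩ := hT.surjOn (Set.mem_image_of_mem _ hx)
    exact ⟨y, hy, MulAction.orbit_eq_iff.mp hyx.symm⟩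
  · rintro ⟨T, -, hT, h⟩
    refine (hT.image (MulAction.orbit A)).subset ?_
    rintro _ ⟨x, hx, rfl⟩
    obtain ⟨y, hy, hxy⟩ := h x hx
    exact ⟨y, hy, (MulAction.orbit_eq_iff.mpr hxy).symm⟩

theorem orbitCount_mono (h : U ⊆ W) : orbitCount A U ≤ orbitCount A W :=
  Set.encard_mono (Set.image_mono h)

theorem orbitCount_union_ne_top (hU : orbitCount A U ≠ ⊤) (hW : orbitCount A W ≠ ⊤) :
    orbitCount A (U ∪ W) ≠ ⊤ := by
  rw [orbitCount, Set.encard_ne_top_iff] at *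
  rw [Set.image_union]
  exact hU.union hW

theorem orbitCount_diff_add_orbitCount (hUW : U ⊆ W) (hU : IsSMulInvariant A U) :
    orbitCount A (W \ U) + orbitCount A U = orbitCount A W := by
  rw [orbitCount, orbitCount, orbitCount, ← Set.encard_union_eq, ← Set.image_union,
    Set.sdiff_union_of_subset hUW]
  rw [Set.disjoint_left]
  rintro _ ⟨x, hx, rfl⟩ ⟨y, hy, hyx⟩
  obtain ⟨a, rfl⟩ := MulAction.orbit_eq_iff.mp hyx.symm
  exact hx.2 (hU a y hy)

theorem eq_of_orbitCount_le (hU : IsSMulInvariant A U) (hUW : U ⊆ W)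
    (hle : orbitCount A W ≤ orbitCount A U) (hfin : orbitCount A U ≠ ⊤) : U = W := by
  have himage : MulAction.orbit A '' U = MulAction.orbit A '' W :=
    Set.Finite.eq_of_subset_of_encard_le (Set.encard_ne_top_iff.mp hfin) (Set.image_mono hUW) hle
  refine hUW.antisymm fun x hx => ?_
  obtain ⟨y, hy, hyx⟩ := himage.ge (Set.mem_image_of_mem _ hx)
  obtain ⟨a, rfl⟩ := MulAction.orbit_eq_iff.mp hyx.symm
  exact hU a y hy

theorem orbitCount_eq_finsum_of_invariant {ι : Type*} [Finite ι] {κ : X → ι}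
    (hκ : ∀ (a : A) x, κ (a • x) = κ x) (U : Set X) :
    orbitCount A U = ∑ᶠ i, orbitCount A {x ∈ U | κ x = i} := by
  have hunion : MulAction.orbit A '' U = ⋃ i, MulAction.orbit A '' {x ∈ U | κ x = i} := by
    rw [← Set.image_iUnion]
    congr 1
    ext x
    simp
  rw [orbitCount, hunion, Set.encard_iUnion_of_finite]
  · rfl
  · rintro i j hij
    rw [Function.onFun, Set.disjoint_left]
    rintro _ ⟨x, ⟨-, hx⟩, rfl⟩ ⟨y, ⟨-, hy⟩, hyx⟩
    obtain ⟨a, rfl⟩ := MulAction.orbit_eq_iff.mp hyx.symm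
    exact hij (by rw [← hx, ← hy, ← hκ a y])

/-- The union of the orbits of `A` meeting `T`. -/
def saturation (A : Type*) {X : Type*} [Group A] [MulAction A X] (T : Set X) : Set X :=
  {x | ∃ y ∈ T, x ∈ MulAction.orbit A y}

theorem subset_saturation (T : Set X) : T ⊆ saturation A T :=
  fun x hx => ⟨x, hx, MulAction.mem_orbit_self x⟩

theorem isSMulInvariant_saturation (T : Set X) : IsSMulInvariant A (saturation A T) :=
  fun a _ ⟨y, hy, hx⟩ => ⟨y, hy, MulAction.mem_orbit_of_mem_orbit a hx⟩

theorem orbitCount_saturation_ne_top {T : Set X} (hT : T.Finite) :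
    orbitCount A (saturation A T) ≠ ⊤ :=
  orbitCount_ne_top_iff.mpr ⟨T, subset_saturation T, hT, fun _ hx => hx⟩

theorem exists_cocycle (A X : Type*) [Group A] [MulAction A X] [IsCancelSMul A X] :
    ∃ γ : X → A, ∀ (a : A) x, γ (a • x) = a * γ x := by
  let r : X → X := fun x => (Quotient.mk (MulAction.orbitRel A X) x).out
  have hr : ∀ (a : A) x, r (a • x) = r x := fun a x =>
    congrArg Quotient.out (Quotient.sound (MulAction.mem_orbit x a))
  have hmem : ∀ x, ∃ a : A, a • r x = x := fun x =>
    MulAction.mem_orbit_symm.mp (Quotient.mk_out (s := MulAction.orbitRel A X) x)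
  choose γ hγ using hmem
  refine ⟨γ, fun a x => IsCancelSMul.right_cancel _ _ (r x) ?_⟩
  rw [← hr a x, hγ, mul_smul, hr, hγ]

theorem orbitCount_eq_encard {γ : X → A} (hU : IsSMulInvariant A U)
    (hγ : ∀ a : A, ∀ x ∈ U, γ (a • x) = a * γ x) :
    orbitCount A U = {x ∈ U | γ x = 1}.encard := by
  have hinj : Set.InjOn (MulAction.orbit A) {x ∈ U | γ x = 1} := by
    rintro x ⟨hx, hx1⟩ y ⟨hy, hy1⟩ hxy
    obtain ⟨a, rfl⟩ := MulAction.orbit_eq_iff.mp hxy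
    have ha : a = 1 := by simpa [hγ a y hy, hy1] using hx1
    exact ha ▸ one_smul A y
  rw [orbitCount, ← hinj.encard_image]
  congr 1
  refine subset_antisymm ?_ (Set.image_mono (Set.sep_subset _ _))
  rintro _ ⟨x, hx, rfl⟩
  exact ⟨(γ x)⁻¹ • x, ⟨hU _ x hx, by rw [hγ _ x hx, inv_mul_cancel]⟩, MulAction.orbit_smul _ _⟩

theorem orbitCount_of_subsingleton [Subsingleton A] (U : Set X) : orbitCount A U = U.encard := by
  have hone : ∀ a : A, a = 1 := fun a => Subsingleton.elim a 1
  have hU : IsSMulInvariant A U := fun a x hx => by rwa [hone a, one_smul]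
  rw [orbitCount_eq_encard (γ := fun _ => 1) hU fun a _ _ => by rw [hone a, mul_one]]
  simp only [and_true, Set.ofPred_mem_eq]

theorem orbitCount_eq_of_fibers [Nonempty Y] [IsCancelSMul A P] (hU : IsSMulInvariant A U)
    {π : X → P} (hπ : ∀ a : A, ∀ x ∈ U, π (a • x) = a • π x)
    {Z : Set Y} (hZ : IsSMulInvariant A Z) {ρ : Y → P}
    (hρ : ∀ a : A, ∀ y ∈ Z, ρ (a • y) = a • ρ y)
    (hfin : ∀ p, {x ∈ U | π x = p}.Finite)
    (hcard : ∀ p, {x ∈ U | π x = p}.encard = {y ∈ Z | ρ y = p}.encard) :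
    orbitCount A U = orbitCount A Z := by
  obtain ⟨γ, hγ⟩ := exists_cocycle A P
  rw [orbitCount_eq_encard (γ := γ ∘ π) hU fun a x hx => by simp [hπ a x hx, hγ],
    orbitCount_eq_encard (γ := γ ∘ ρ) hZ fun a y hy => by simp [hρ a y hy, hγ]]
  suffices hbij : ∃ f : X → Y, Set.BijOn f {x ∈ U | γ (π x) = 1} {y ∈ Z | γ (ρ y) = 1} by
    obtain ⟨f, hf⟩ := hbij
    exact hf.injOn.encard_image.symm.trans (congrArg Set.encard hf.image_eq)
  choose F hF using fun p => (hfin p).exists_bijOn_of_encard_eq (hcard p)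
  refine ⟨fun x => F (π x) x, ?_, ?_, ?_⟩
  · rintro x ⟨hx, hx1⟩
    obtain ⟨hmem, hπx⟩ := (hF (π x)).mapsTo ⟨hx, rfl⟩
    exact ⟨hmem, by rwa [hπx]⟩
  · rintro x ⟨hx, -⟩ y ⟨hy, -⟩ (hxy : F (π x) x = F (π y) y)
    have hπxy : π x = π y := by
      rw [← ((hF (π x)).mapsTo ⟨hx, rfl⟩).2, hxy, ((hF (π y)).mapsTo ⟨hy, rfl⟩).2]
    rw [← hπxy] at hxy
    exact (hF (π x)).injOn ⟨hx, rfl⟩ ⟨hy, hπxy.symm⟩ hxy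
  · rintro y ⟨hy, hy1⟩
    obtain ⟨x, ⟨hx, hπx⟩, hxy⟩ := (hF (ρ y)).surjOn ⟨hy, rfl⟩
    exact ⟨x, ⟨hx, by rwa [hπx]⟩, by simp only [hπx, hxy]⟩

theorem encard_cocycle_eq_one {N : Subgroup A} {δ : A → N} (hδ : ∀ (n : N) a, δ (n • a) = n * δ a) :
    {a | δ a = 1}.encard = ENat.card (A ⧸ N) := by
  suffices hbij : Set.BijOn (fun a : A => (↑a⁻¹ : A ⧸ N)) {a | δ a = 1} Set.univ by
    rw [← hbij.injOn.encard_image, hbij.image_eq, Set.encard_univ]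
  refine ⟨fun _ _ => trivial, ?_, ?_⟩
  · intro a ha b hb hab
    have hmem : a * b⁻¹ ∈ N := by simpa using QuotientGroup.eq.mp hab
    obtain ⟨n, rfl⟩ : ∃ n : N, n • b = a := ⟨⟨_, hmem⟩, inv_mul_cancel_right a b⟩
    have hn : n = 1 := by simpa [hδ, hb.out] using ha
    rw [hn, one_smul]
  · intro q _
    obtain ⟨a, rfl⟩ := QuotientGroup.mk_surjective q
    refine ⟨(δ a⁻¹)⁻¹ • a⁻¹, by simp [hδ], QuotientGroup.eq.mpr ?_⟩
    simp [Subgroup.smul_def]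

theorem orbitCount_subgroup [IsCancelSMul A X] (N : Subgroup A) [N.FiniteIndex]
    (hU : IsSMulInvariant A U) : orbitCount N U = N.index * orbitCount A U := by
  obtain ⟨γ, hγ⟩ := exists_cocycle A X
  obtain ⟨δ, hδ⟩ := exists_cocycle N A
  have hinj : Set.InjOn (fun p : A × X => p.1 • p.2) ({a | δ a = 1} ×ˢ {x ∈ U | γ x = 1}) := by
    rintro ⟨a, x⟩ ⟨-, -, hx⟩ ⟨b, y⟩ ⟨-, -, hy⟩ (h : a • x = b • y)
    have hab : a = b := by simpa only [hγ, hx, hy, mul_one] using congrArg γ h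
    subst hab
    rw [smul_left_cancel_iff] at h
    rw [h]
  have himage : (fun p : A × X => p.1 • p.2) '' ({a | δ a = 1} ×ˢ {x ∈ U | γ x = 1}) =
      {x ∈ U | δ (γ x) = 1} := by
    ext x
    constructor
    · rintro ⟨⟨a, u⟩, ⟨ha, hu, hu1⟩, rfl⟩
      exact ⟨hU a u hu, by rwa [hγ, hu1, mul_one]⟩
    · rintro ⟨hx, hx1⟩
      exact ⟨(γ x, (γ x)⁻¹ • x), ⟨hx1, hU _ x hx, by rw [hγ, inv_mul_cancel]⟩, smul_inv_smul _ _⟩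
  have hindex : (N.index : ℕ∞) = ENat.card (A ⧸ N) := ENat.card_eq_coe_natCard _ |>.symm
  rw [orbitCount_eq_encard (γ := γ) hU fun a x _ => hγ a x, hindex, ← encard_cocycle_eq_one hδ,
    ← Set.encard_prod, ← hinj.encard_image, himage]
  exact orbitCount_eq_encard (γ := δ ∘ γ) (fun n => hU n) fun n x _ => by
    rw [Function.comp_apply, Subgroup.smul_def, hγ]; exact hδ n (γ x)

end Orbits

section DoubleCosets

variable {G X : Type*} [Group G] [MulAction G X] [IsCancelSMul G X] {A B : Subgroup G} {S : Set G}

theorem injOn_doubleCosetMk_of_existsUnique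
    (hS : ∀ g : G, ∃! s, s ∈ S ∧ ∃ a ∈ A, ∃ b ∈ B, g = a * s * b) :
    Set.InjOn (DoubleCoset.mk A B) S := by
  intro s hs s' hs' h
  obtain ⟨a, ha, b, hb, hab⟩ := (DoubleCoset.eq A B s s').mp h
  exact (hS s').unique ⟨hs, a, ha, b, hb, hab⟩ ⟨hs', 1, one_mem A, 1, one_mem B, by simp⟩

theorem eq_and_mem_orbit_of_doubleCoset
    (hS : Set.InjOn (DoubleCoset.mk A B) S) {s s' : G} (hs : s ∈ S) (hs' : s' ∈ S)
    {x y : X} (hA : x ∈ MulAction.orbit A y) (hB : s⁻¹ • x ∈ MulAction.orbit B (s'⁻¹ • y)) :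
    s = s' ∧ x ∈ MulAction.orbit ↥(A ⊓ B.map (MulAut.conj s).toMonoidHom) y := by
  obtain ⟨⟨a, ha⟩, rfl : a • y = x⟩ := hA
  obtain ⟨⟨b, hb⟩, hby : b • s'⁻¹ • y = s⁻¹ • a • y⟩ := hB
  have hab : a = s * b * s'⁻¹ := by
    refine IsCancelSMul.right_cancel _ _ y ?_
    rw [mul_smul, mul_smul, hby, smul_inv_smul]
  obtain rfl : s = s' :=
    hS hs hs' ((DoubleCoset.eq A B s s').mpr ⟨a⁻¹, inv_mem ha, b, hb, by rw [hab]; group⟩)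
  exact ⟨rfl, ⟨a, ha, b, hb, hab.symm⟩, rfl⟩

theorem tsum_orbitCount_doubleCoset_le
    (hS : Set.InjOn (DoubleCoset.mk A B) S) {U W : Set X} {Z : G → Set X}
    (hZ : ∀ s, IsSMulInvariant ↥(A ⊓ B.map (MulAut.conj s).toMonoidHom) (Z s))
    (hU : ∀ s, Z s ⊆ U) (hW : ∀ s, ∀ x ∈ Z s, s⁻¹ • x ∈ W) :
    ∑' s : S, ((orbitCount ↥(A ⊓ B.map (MulAut.conj (s : G)).toMonoidHom) (Z s) : ℕ∞) : ℝ≥0∞) ≤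
      (orbitCount A U : ℕ∞) * (orbitCount B W : ℕ∞) := by
  let C : S → Subgroup G := fun s => A ⊓ B.map (MulAut.conj (s : G)).toMonoidHom
  choose γ hγ using fun s => exists_cocycle (C s) X
  let T : S → Set X := fun s => {x ∈ Z s | γ s x = 1}
  let Φ : (Σ s : S, T s) → (MulAction.orbit A '' U) × (MulAction.orbit B '' W) := fun p =>
    (⟨_, Set.mem_image_of_mem _ (hU _ p.2.2.1)⟩, ⟨_, Set.mem_image_of_mem _ (hW _ _ p.2.2.1)⟩)
  have hΦ : Function.Injective Φ := by
    rintro ⟨⟨s, hs⟩, ⟨x, hx, hx1⟩⟩ ⟨⟨s', hs'⟩, ⟨y, hy, hy1⟩⟩ h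
    have hA : MulAction.orbit A x = MulAction.orbit A y := congrArg (·.1.1) h
    have hB : MulAction.orbit B (s⁻¹ • x) = MulAction.orbit B (s'⁻¹ • y) := congrArg (·.2.1) h
    obtain ⟨rfl, c, rfl⟩ := eq_and_mem_orbit_of_doubleCoset hS hs hs'
      (MulAction.orbit_eq_iff.mp hA) (MulAction.orbit_eq_iff.mp hB)
    have hc : c = 1 := by rwa [hγ ⟨s, hs⟩ c y, hy1, mul_one] at hx1
    exact congrArg (Sigma.mk _) (Subtype.ext (hc ▸ one_smul (C ⟨s, hs⟩) y))
  calc ∑' s : S, ((orbitCount (C s) (Z s) : ℕ∞) : ℝ≥0∞)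
      = ∑' s : S, ∑' _ : T s, (1 : ℝ≥0∞) := tsum_congr fun s => by
        rw [orbitCount_eq_encard (hZ s) fun a x _ => hγ s a x, ENNReal.tsum_set_one]
    _ = ∑' _ : Σ s : S, T s, (1 : ℝ≥0∞) := (ENNReal.tsum_sigma' fun _ => 1).symm
    _ ≤ ∑' _ : (MulAction.orbit A '' U) × (MulAction.orbit B '' W), (1 : ℝ≥0∞) :=
      ENNReal.tsum_comp_le_tsum_of_injective hΦ fun _ => 1
    _ = _ := by
      rw [ENNReal.tsum_prod', ENNReal.tsum_set_one, ENNReal.tsum_set_const]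
      rfl

end DoubleCosets

/-! ### Graphs -/

/-- A directed multigraph with vertex set `V` and edge set `E`; only the underlying undirected
graph matters, the direction serves to name the two ends of an edge. -/
structure Multigraph (V E : Type*) where
  source : E → V
  target : E → V

namespace Multigraph

section Connectivity

variable {V E V' E' : Type*} {Γ : Multigraph V E} {D D' : Set E} {e : E} {u v w : V}

/-- The vertices `u` and `v` are joined by an undirected path with edges in `D`. -/
def Conn (Γ : Multigraph V E) (D : Set E) : V → V → Prop :=
  Relation.EqvGen fun u v => ∃ e ∈ D, Γ.source e = u ∧ Γ.target e = v

/-- The vertex set of the connected component of `v` in the subgraph with edge set `D`. -/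
def component (Γ : Multigraph V E) (D : Set E) (v : V) : Set V := {w | Γ.Conn D v w}

theorem Conn.refl (v : V) : Γ.Conn D v v := Relation.EqvGen.refl v

theorem Conn.symm (h : Γ.Conn D u v) : Γ.Conn D v u := Relation.EqvGen.symm _ _ h

theorem Conn.trans (h : Γ.Conn D u v) (h' : Γ.Conn D v w) : Γ.Conn D u w :=
  Relation.EqvGen.trans _ _ _ h h'

theorem Conn.edge (he : e ∈ D) : Γ.Conn D (Γ.source e) (Γ.target e) :=
  Relation.EqvGen.rel _ _ ⟨e, he, rfl, rfl⟩

theorem Conn.map {Γ' : Multigraph V' E'} {C : Set E'} {φ : V → V'} {ψ : E → E'}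
    (hsource : ∀ e ∈ D, Γ'.source (ψ e) = φ (Γ.source e))
    (htarget : ∀ e ∈ D, Γ'.target (ψ e) = φ (Γ.target e)) (hψ : Set.MapsTo ψ D C)
    (h : Γ.Conn D u v) : Γ'.Conn C (φ u) (φ v) := by
  induction h with
  | rel x y h =>
    obtain ⟨e, he, rfl, rfl⟩ := h
    rw [← hsource e he, ← htarget e he]
    exact Conn.edge (hψ he)
  | refl x => exact Conn.refl _
  | symm x y _ ih => exact ih.symm
  | trans x y z _ _ ih ih' => exact ih.trans ih'

theorem Conn.mono (hD : D ⊆ D') (h : Γ.Conn D u v) : Γ.Conn D' u v :=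
  Conn.map (φ := id) (ψ := id) (fun _ _ => rfl) (fun _ _ => rfl) hD h

theorem Conn.apply_eq {β : Type*} {g : V → β} (hg : ∀ e ∈ D, g (Γ.source e) = g (Γ.target e))
    (h : Γ.Conn D u v) : g u = g v := by
  induction h with
  | rel x y h =>
    obtain ⟨e, he, rfl, rfl⟩ := h
    exact hg e he
  | refl x => rfl
  | symm x y _ ih => exact ih.symm
  | trans x y z _ _ ih ih' => exact ih.trans ih'

theorem Conn.exists_finite (h : Γ.Conn D u v) : ∃ T ⊆ D, T.Finite ∧ Γ.Conn T u v := by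
  induction h with
  | rel x y h =>
    obtain ⟨e, he, rfl, rfl⟩ := h
    exact ⟨{e}, Set.singleton_subset_iff.mpr he, Set.finite_singleton e, Conn.edge rfl⟩
  | refl x => exact ⟨∅, Set.empty_subset D, Set.finite_empty, Conn.refl x⟩
  | symm x y _ ih =>
    obtain ⟨T, hTD, hT, hconn⟩ := ih
    exact ⟨T, hTD, hT, hconn.symm⟩
  | trans x y z _ _ ih ih' =>
    obtain ⟨T, hTD, hT, hconn⟩ := ih
    obtain ⟨T', hTD', hT', hconn'⟩ := ih'
    exact ⟨T ∪ T', Set.union_subset hTD hTD', hT.union hT',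
      (hconn.mono Set.subset_union_left).trans (hconn'.mono Set.subset_union_right)⟩

theorem mem_component_self (v : V) : v ∈ Γ.component D v := Conn.refl v

theorem component_mono (hD : D ⊆ D') : Γ.component D v ⊆ Γ.component D' v :=
  fun _ h => h.mono hD

theorem Conn.component_eq (h : Γ.Conn D u v) : Γ.component D u = Γ.component D v :=
  Set.ext fun _ => ⟨h.symm.trans, h.trans⟩

theorem component_subset {W : Set V} (hv : v ∈ W)
    (hW : ∀ e ∈ D, Γ.source e ∈ W ↔ Γ.target e ∈ W) : Γ.component D v ⊆ W := fun _ h =>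
  (h.apply_eq (g := (· ∈ W)) fun e he => propext (hW e he)).mp hv

theorem source_mem_component_iff (he : e ∈ D) :
    Γ.source e ∈ Γ.component D v ↔ Γ.target e ∈ Γ.component D v :=
  ⟨fun h => h.trans (Conn.edge he), fun h => h.trans (Conn.edge he).symm⟩

theorem component_insert_subset :
    Γ.component (insert e D) v ⊆ Γ.component D v ∪
      (Γ.component D (Γ.source e) ∪ Γ.component D (Γ.target e)) := by
  refine component_subset (Or.inl (mem_component_self v)) ?_
  rintro f (rfl | hf)
  · exact iff_of_true (Or.inr (Or.inl (mem_component_self _)))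
      (Or.inr (Or.inr (mem_component_self _)))
  · simp only [Set.mem_union, source_mem_component_iff hf]

theorem component_insert_eq (hsource : Γ.source e ∉ Γ.component D v)
    (htarget : Γ.target e ∉ Γ.component D v) :
    Γ.component (insert e D) v = Γ.component D v := by
  refine (component_subset (mem_component_self v) ?_).antisymm
    (component_mono (Set.subset_insert e D))
  rintro f (rfl | hf)
  · exact iff_of_false hsource htarget
  · exact source_mem_component_iff hf

end Connectivity

section Trees

variable {V E : Type*} {Γ : Multigraph V E} {D : Set E} {W : Set V}

/-- The subgraph with edge set `D` contains no cycle, encoded as the vanishing of its first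
rational cohomology: every cochain on the edges is a coboundary. -/
def AcyclicOn (Γ : Multigraph V E) (D : Set E) : Prop :=
  ∀ c : E → ℚ, ∃ f : V → ℚ, ∀ e ∈ D, f (Γ.target e) = f (Γ.source e) + c e

theorem AcyclicOn.mono {D' : Set E} (hD : D ⊆ D') (h : Γ.AcyclicOn D') : Γ.AcyclicOn D :=
  fun c => (h c).imp fun _ hf e he => hf e (hD he)

/-- `W` and `D` are the vertex set and the edge set of a tree contained in `Γ`. -/
structure IsSubtree (Γ : Multigraph V E) (W : Set V) (D : Set E) : Prop where
  source_mem : ∀ e ∈ D, Γ.source e ∈ W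
  target_mem : ∀ e ∈ D, Γ.target e ∈ W
  nonempty : W.Nonempty
  conn : ∀ u ∈ W, ∀ v ∈ W, Γ.Conn D u v
  acyclicOn : Γ.AcyclicOn D

end Trees

/-- The group `A` acts on `Γ` by graph automorphisms. -/
class Equivariant (A : Type*) {V E : Type*} [SMul A V] [SMul A E] (Γ : Multigraph V E) :
    Prop where
  source_smul (a : A) (e : E) : Γ.source (a • e) = a • Γ.source e
  target_smul (a : A) (e : E) : Γ.target (a • e) = a • Γ.target e

instance {A V E : Type*} [Group A] [MulAction A V] [MulAction A E]
    (Γ : Multigraph V E) [Γ.Equivariant A] (N : Subgroup A) : Γ.Equivariant N where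
  source_smul a e := Equivariant.source_smul (a : A) e
  target_smul a e := Equivariant.target_smul (a : A) e

end Multigraph

/-! ### The Euler characteristic of a quotient of a tree -/

/-- The first rational Betti number of the group `A`. For a group that is not finitely generated
the value may be the junk value `0` of `Module.finrank`. -/
noncomputable def betti (A : Type*) [Group A] : ℕ := Module.finrank ℚ (Additive A →+ ℚ)

theorem betti_eq_zero_of_finite (A : Type*) [Group A] [Finite A] : betti A = 0 := by
  have hzero : ∀ φ : Additive A →+ ℚ, φ = 0 := fun φ => AddMonoidHom.ext fun a => by
    have hφ : Nat.card A • φ a = 0 := by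
      rw [← map_nsmul, ← ofMul_toMul a, ← ofMul_pow, pow_card_eq_one', ofMul_one, map_zero]
    exact (smul_eq_zero.mp hφ).resolve_left Nat.card_pos.ne'
  have : Subsingleton (Additive A →+ ℚ) := ⟨fun φ ψ => (hzero φ).trans (hzero ψ).symm⟩
  exact Module.finrank_zero_of_subsingleton

section Euler

variable (A : Type*) {V E : Type*} [Group A] [MulAction A V] [MulAction A E]
  {Γ : Multigraph V E} [Γ.Equivariant A] {W : Set V} {D : Set E}

/-- The rational functions on `W`, extended by zero, that the elements of `A` translate by
constants, together with the character of `A` recording these constants. They correspond to the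
`A`-invariant closed cochains on a tree with vertex set `W`. -/
def translatedFunctions (W : Set V) : Submodule ℚ ((V → ℚ) × (Additive A →+ ℚ)) where
  carrier := {p | (∀ v ∉ W, p.1 v = 0) ∧
    ∀ a : A, ∀ v ∈ W, p.1 (a • v) = p.1 v + p.2 (Additive.ofMul a)}
  add_mem' := fun {p q} hp hq => ⟨fun v hv => by simp [hp.1 v hv, hq.1 v hv], fun a v hv => by
    simp only [Prod.fst_add, Prod.snd_add, Pi.add_apply, AddMonoidHom.add_apply, hp.2 a v hv,
      hq.2 a v hv]
    ring⟩
  zero_mem' := ⟨fun _ _ => rfl, fun _ _ _ => by simp⟩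
  smul_mem' := fun c p hp => ⟨fun v hv => by simp [hp.1 v hv], fun a v hv => by
    simp [hp.2 a v hv, mul_add]⟩

variable {A}

theorem translatedFunctions_apply_eq {p : (V → ℚ) × (Additive A →+ ℚ)}
    (hp : p ∈ translatedFunctions A W) (hW : IsSMulInvariant A W) (a : A) {v : V} (hv : v ∈ W) :
    p.1 v = p.1 (a⁻¹ • v) + p.2 (Additive.ofMul a) := by
  rw [← hp.2 a _ (hW a⁻¹ v hv), smul_inv_smul]

/-- Restriction of a translated function to a set `R` of vertices, together with its character. -/
def restrictVertices (A : Type*) [Group A] [MulAction A V] (W R : Set V) :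
    translatedFunctions A W →ₗ[ℚ] (R → ℚ) × (Additive A →+ ℚ) where
  toFun p := (fun v => p.1.1 v, p.1.2)
  map_add' _ _ := rfl
  map_smul' _ _ := rfl

theorem restrictVertices_bijective (hW : IsSMulInvariant A W) {γ : V → A}
    (hγ : ∀ (a : A) v, γ (a • v) = a * γ v) :
    Function.Bijective (restrictVertices A W {v ∈ W | γ v = 1}) := by
  have hmem : ∀ {v}, v ∈ W → (γ v)⁻¹ • v ∈ {v ∈ W | γ v = 1} := fun {v} hv =>
    ⟨hW _ v hv, by rw [hγ, inv_mul_cancel]⟩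
  constructor
  · rw [injective_iff_map_eq_zero]
    rintro ⟨p, hp⟩ hzero
    have hφ : p.2 = 0 := congrArg Prod.snd hzero
    refine Subtype.ext (Prod.ext (funext fun v => ?_) hφ)
    by_cases hv : v ∈ W
    · have hrep : p.1 ((γ v)⁻¹ • v) = 0 := congrFun (congrArg Prod.fst hzero) ⟨_, hmem hv⟩
      simp [translatedFunctions_apply_eq hp hW (γ v) hv, hrep, hφ]
    · exact hp.1 v hv
  · rintro ⟨h, φ⟩
    classical
    let f : V → ℚ := fun v =>
      if hv : v ∈ W then h ⟨(γ v)⁻¹ • v, hmem hv⟩ + φ (Additive.ofMul (γ v)) else 0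
    have hf : (f, φ) ∈ translatedFunctions A W := by
      refine ⟨fun v hv => dif_neg hv, fun a v hv => ?_⟩
      simp only [f, hv, hW a v hv, dif_pos, hγ, mul_inv_rev, mul_smul, inv_smul_smul, ofMul_mul,
        map_add]
      ring
    refine ⟨⟨_, hf⟩, Prod.ext (funext fun ⟨v, hv, hv1⟩ => ?_) rfl⟩
    simp [restrictVertices, f, hv, hv1]

/-- The increments of a translated function along the edges in `R`, together with its value at
`v₀`. -/
def restrictEdges (A : Type*) [Group A] [MulAction A V] (Γ : Multigraph V E) (W : Set V)
    (R : Set E) (v₀ : V) : translatedFunctions A W →ₗ[ℚ] (R → ℚ) × ℚ where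
  toFun p := (fun e => p.1.1 (Γ.target e) - p.1.1 (Γ.source e), p.1.1 v₀)
  map_add' p q := by ext <;> simp; ring
  map_smul' c p := by ext <;> simp [mul_sub]

theorem restrictEdges_injective (hW : IsSMulInvariant A W) (hD : IsSMulInvariant A D)
    (hT : Γ.IsSubtree W D) {γ : E → A} (hγ : ∀ (a : A) e, γ (a • e) = a * γ e) {v₀ : V}
    (hv₀ : v₀ ∈ W) : Function.Injective (restrictEdges A Γ W {e ∈ D | γ e = 1} v₀) := by
  rw [injective_iff_map_eq_zero]
  rintro ⟨p, hp⟩ hzero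
  have hedge : ∀ e ∈ D, p.1 (Γ.source e) = p.1 (Γ.target e) := fun e he => by
    have hincr := congrFun (congrArg Prod.fst hzero)
      ⟨(γ e)⁻¹ • e, hD _ e he, by rw [hγ, inv_mul_cancel]⟩
    simp only [restrictEdges, LinearMap.coe_mk, AddHom.coe_mk, Prod.fst_zero, Pi.zero_apply,
      Multigraph.Equivariant.source_smul, Multigraph.Equivariant.target_smul] at hincr
    rw [translatedFunctions_apply_eq hp hW (γ e) (hT.source_mem e he),
      translatedFunctions_apply_eq hp hW (γ e) (hT.target_mem e he)]
    linarith
  have hf : ∀ v ∈ W, p.1 v = 0 := fun v hv =>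
    ((hT.conn v hv v₀ hv₀).apply_eq hedge).trans (congrArg Prod.snd hzero)
  refine Subtype.ext (Prod.ext (funext fun v => ?_) ?_)
  · by_cases hv : v ∈ W
    exacts [hf v hv, hp.1 v hv]
  · ext a
    have hφ := hp.2 a v₀ hv₀
    rw [hf _ (hW a v₀ hv₀), hf _ hv₀] at hφ
    simpa using hφ.symm

omit [MulAction A E] [Γ.Equivariant A] in
theorem exists_character_of_invariant_increments (hW : IsSMulInvariant A W)
    (hT : Γ.IsSubtree W D) {f : V → ℚ}
    (hf : ∀ a : A, ∀ e ∈ D, f (a • Γ.target e) - f (a • Γ.source e) =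
      f (Γ.target e) - f (Γ.source e)) :
    ∃ φ : Additive A →+ ℚ, ∀ a : A, ∀ v ∈ W, f (a • v) = f v + φ (Additive.ofMul a) := by
  obtain ⟨v₀, hv₀⟩ := hT.nonempty
  have hconst : ∀ a : A, ∀ v ∈ W, f (a • v) - f v = f (a • v₀) - f v₀ := fun a v hv =>
    (hT.conn v hv v₀ hv₀).apply_eq (g := fun u => f (a • u) - f u) fun e he => by
      linarith [hf a e he]
  refine ⟨AddMonoidHom.mk' (fun a => f (a.toMul • v₀) - f v₀) fun a b => ?_, fun a v hv => ?_⟩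
  · rw [toMul_add, mul_smul]
    linarith [hconst a.toMul _ (hW b.toMul v₀ hv₀)]
  · simp only [AddMonoidHom.mk'_apply, toMul_ofMul]
    linarith [hconst a v hv]

theorem restrictEdges_surjective (hW : IsSMulInvariant A W) (hD : IsSMulInvariant A D)
    (hT : Γ.IsSubtree W D) {γ : E → A} (hγ : ∀ (a : A) e, γ (a • e) = a * γ e) {v₀ : V}
    (hv₀ : v₀ ∈ W) : Function.Surjective (restrictEdges A Γ W {e ∈ D | γ e = 1} v₀) := by
  rintro ⟨c, x⟩
  classical
  let c' : E → ℚ := fun e => Function.extend Subtype.val c 0 ((γ e)⁻¹ • e)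
  have hc' : ∀ (a : A) e, c' (a • e) = c' e := fun a e => by
    simp only [c', hγ, mul_inv_rev, mul_smul, inv_smul_smul]
  obtain ⟨f, hf⟩ := hT.acyclicOn c'
  obtain ⟨φ, hφ⟩ := exists_character_of_invariant_increments (A := A) hW hT (f := f)
    fun a e he => by
      have hae := hf _ (hD a e he)
      rw [Multigraph.Equivariant.source_smul, Multigraph.Equivariant.target_smul, hc'] at hae
      linarith [hf e he]
  let p : V → ℚ := W.indicator fun v => f v - f v₀ + x
  have hp : (p, φ) ∈ translatedFunctions A W := by
    refine ⟨fun v hv => by simp [p, hv], fun a v hv => ?_⟩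
    simp only [p, Set.indicator_of_mem hv, Set.indicator_of_mem (hW a v hv), hφ a v hv]
    ring
  refine ⟨⟨_, hp⟩, Prod.ext (funext fun ⟨e, he, he1⟩ => ?_) ?_⟩
  · have hce : c' e = c ⟨e, he, he1⟩ := by
      simp only [c', he1, inv_one, one_smul]
      exact Subtype.val_injective.extend_apply c 0 ⟨e, he, he1⟩
    simp [restrictEdges, p, Set.indicator_of_mem (hT.source_mem e he),
      Set.indicator_of_mem (hT.target_mem e he), hf e he, hce]
  · simp [restrictEdges, p, Set.indicator_of_mem hv₀]

theorem orbitCount_edges_add_one [IsCancelSMul A V] (hW : IsSMulInvariant A W)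
    (hD : IsSMulInvariant A D) (hT : Γ.IsSubtree W D) (hWfin : orbitCount A W ≠ ⊤)
    (hDfin : orbitCount A D ≠ ⊤) :
    orbitCount A D + 1 = orbitCount A W + betti A := by
  obtain ⟨γ, hγ⟩ := exists_cocycle A V
  have hδ : ∀ (a : A) e, γ (Γ.source (a • e)) = a * γ (Γ.source e) := fun a e => by
    rw [Multigraph.Equivariant.source_smul, hγ]
  obtain ⟨v₀, hv₀⟩ := hT.nonempty
  rw [orbitCount_eq_encard hW fun a v _ => hγ a v] at hWfin ⊢
  rw [orbitCount_eq_encard (γ := γ ∘ Γ.source) hD fun a e _ => hδ a e] at hDfin ⊢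
  have hRW := Set.encard_ne_top_iff.mp hWfin
  have hRD := Set.encard_ne_top_iff.mp hDfin
  have := hRW.fintype
  have := hRD.fintype
  let vertexEquiv := LinearEquiv.ofBijective _ (restrictVertices_bijective hW hγ)
  let edgeEquiv := LinearEquiv.ofBijective _
    ⟨restrictEdges_injective (γ := γ ∘ Γ.source) hW hD hT hδ hv₀,
      restrictEdges_surjective (γ := γ ∘ Γ.source) hW hD hT hδ hv₀⟩
  let e := vertexEquiv.symm.trans edgeEquiv
  have : FiniteDimensional ℚ (Additive A →+ ℚ) :=
    Module.Finite.of_injective (e.toLinearMap ∘ₗ LinearMap.inr ℚ _ _)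
      (e.injective.comp LinearMap.inr_injective)
  have hrank := e.finrank_eq
  simp only [Module.finrank_prod, Module.finrank_fintype_fun_eq_card, Module.finrank_self] at hrank
  rw [← Set.coe_fintypeCard, ← Set.coe_fintypeCard, betti]
  exact_mod_cast hrank.symm

end Euler

/-! ### Critical and essential edges -/

namespace Multigraph

section Critical

variable {V E : Type*} [PartialOrder E] {Γ : Multigraph V E} {D : Set E} {e f c : E} {v w : V}

/-- The connected component of `v` in the subgraph formed by the edges of `D` smaller than `e`. -/
def componentBelow (Γ : Multigraph V E) (D : Set E) (e : E) (v : V) : Set V :=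
  Γ.component (D ∩ Set.Iio e) v

/-- When the edges of `D` are added in increasing order, the component of `v` becomes infinite
exactly when `e` is added. -/
structure IsCritical (Γ : Multigraph V E) (D : Set E) (v : V) (e : E) : Prop where
  mem : e ∈ D
  finite : (Γ.componentBelow D e v).Finite
  infinite : (Γ.component (insert e (D ∩ Set.Iio e)) v).Infinite

/-- The edges of `D` both of whose endpoints are joined to infinitely many vertices by paths
through smaller edges of `D`. -/
def essentialIn (Γ : Multigraph V E) (D : Set E) : Set E :=
  {e ∈ D | (Γ.componentBelow D e (Γ.source e)).Infinite ∧
    (Γ.componentBelow D e (Γ.target e)).Infinite}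

open Classical in
/-- An endpoint of `e` with finite component below `e`, if there is one. -/
noncomputable def finiteEnd (Γ : Multigraph V E) (D : Set E) (e : E) : V :=
  if (Γ.componentBelow D e (Γ.source e)).Finite then Γ.source e else Γ.target e

theorem essentialIn_mono {D' : Set E} (h : D ⊆ D') : Γ.essentialIn D ⊆ Γ.essentialIn D' := by
  have hbelow : ∀ e v, Γ.componentBelow D e v ⊆ Γ.componentBelow D' e v := fun e _ =>
    component_mono (Set.inter_subset_inter_left (Set.Iio e) h)
  exact fun e he => ⟨h he.1, he.2.1.mono (hbelow _ _), he.2.2.mono (hbelow _ _)⟩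

theorem insert_inter_Iio_subset (he : e ∈ D) (hef : e < f) :
    insert e (D ∩ Set.Iio e) ⊆ D ∩ Set.Iio f :=
  Set.insert_subset ⟨he, hef⟩ (Set.inter_subset_inter_right D (Set.Iio_subset_Iio hef.le))

theorem finite_componentBelow_finiteEnd (he : e ∈ D \ Γ.essentialIn D) :
    (Γ.componentBelow D e (Γ.finiteEnd D e)).Finite := by
  unfold finiteEnd
  split_ifs with hsource
  · exact hsource
  · by_contra htarget
    exact he.2 ⟨he.1, hsource, htarget⟩

namespace IsCritical

theorem not_lt_of_finite (h : Γ.IsCritical D v e) (hfin : (Γ.componentBelow D f v).Finite) :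
    ¬ e < f := fun hlt =>
  h.infinite (hfin.subset (component_mono (insert_inter_Iio_subset h.mem hlt)))

theorem unique (hD : IsChain (· ≤ ·) D) (h : Γ.IsCritical D v e) (h' : Γ.IsCritical D v f) :
    e = f := by
  by_contra hne
  rcases hD.total h.mem h'.mem with hle | hle
  · exact h.not_lt_of_finite h'.finite (lt_of_le_of_ne hle hne)
  · exact h'.not_lt_of_finite h.finite (lt_of_le_of_ne hle (Ne.symm hne))

theorem of_mem (h : Γ.IsCritical D v e) (hw : w ∈ Γ.componentBelow D e v) :
    Γ.IsCritical D w e where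
  mem := h.mem
  finite := by
    rw [componentBelow, ← Conn.component_eq hw]
    exact h.finite
  infinite := by
    rw [← (hw.mono (Set.subset_insert e _)).component_eq]
    exact h.infinite

theorem mem_source_or_mem_target (h : Γ.IsCritical D v e) :
    Γ.source e ∈ Γ.componentBelow D e v ∨ Γ.target e ∈ Γ.componentBelow D e v := by
  by_contra! hnot
  apply h.infinite
  rw [component_insert_eq hnot.1 hnot.2]
  exact h.finite

theorem not_finite_both (h : Γ.IsCritical D v e)
    (hsource : (Γ.componentBelow D e (Γ.source e)).Finite) :
    (Γ.componentBelow D e (Γ.target e)).Infinite := fun htarget =>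
  h.infinite ((h.finite.union (hsource.union htarget)).subset component_insert_subset)

theorem finiteEnd_mem (h : Γ.IsCritical D v e) :
    Γ.finiteEnd D e ∈ Γ.componentBelow D e v := by
  unfold finiteEnd
  split_ifs with hsource
  · refine h.mem_source_or_mem_target.resolve_right fun htarget => ?_
    exact h.not_finite_both hsource (h.of_mem htarget).finite
  · exact h.mem_source_or_mem_target.resolve_left fun hmem => hsource (h.of_mem hmem).finite

theorem mem_of_isCritical (h : Γ.IsCritical D v e) (h' : Γ.IsCritical D w e) :
    w ∈ Γ.componentBelow D e v :=
  h.finiteEnd_mem.trans h'.finiteEnd_mem.symm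

theorem notMem_essentialIn (h : Γ.IsCritical D v e) : e ∉ Γ.essentialIn D := fun he =>
  h.mem_source_or_mem_target.elim (fun hmem => he.2.1 (h.of_mem hmem).finite)
    fun hmem => he.2.2 (h.of_mem hmem).finite

theorem fiber_eq (hD : IsChain (· ≤ ·) D) (h : Γ.IsCritical D v c) :
    {e ∈ D \ Γ.essentialIn D | Γ.IsCritical D (Γ.finiteEnd D e) c} =
      insert c {e ∈ D ∩ Set.Iio c | Γ.source e ∈ Γ.componentBelow D c v} := by
  ext e
  constructor
  · rintro ⟨he, hcrit⟩
    by_cases hec : e = c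
    · exact Or.inl hec
    have hlt : e < c := lt_of_le_of_ne ((hD.total he.1 h.mem).resolve_right fun hle =>
      hcrit.not_lt_of_finite (finite_componentBelow_finiteEnd he)
        (lt_of_le_of_ne hle (Ne.symm hec))) hec
    refine Or.inr ⟨⟨he.1, hlt⟩, ?_⟩
    have hmem := h.mem_of_isCritical hcrit
    unfold finiteEnd at hmem
    split_ifs at hmem
    · exact hmem
    · exact (source_mem_component_iff (D := D ∩ Set.Iio c) ⟨he.1, hlt⟩).mpr hmem
  · rintro (rfl | ⟨⟨he, hlt⟩, hmem⟩)
    · exact ⟨⟨h.mem, h.notMem_essentialIn⟩, h.of_mem h.finiteEnd_mem⟩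
    · have hsource : (Γ.componentBelow D e (Γ.source e)).Finite :=
        (h.of_mem hmem).finite.subset
          (component_mono (Set.inter_subset_inter_right D (Set.Iio_subset_Iio hlt.le)))
      refine ⟨⟨he, fun hess => hess.2.1 hsource⟩, ?_⟩
      rw [finiteEnd, if_pos hsource]
      exact h.of_mem hmem

end IsCritical

end Critical

section Existence

variable {V E : Type*} [PartialOrder E] {Γ : Multigraph V E} {D D₀ : Set E} {e : E} {v : V}

/-- The component of `v` below the edge `e` of `D` is finite, and `e` leaves it. -/
structure IsCut (Γ : Multigraph V E) (D : Set E) (v : V) (e : E) : Prop where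
  mem : e ∈ D
  finite : (Γ.componentBelow D e v).Finite
  not_iff : ¬(Γ.source e ∈ Γ.componentBelow D e v ↔ Γ.target e ∈ Γ.componentBelow D e v)

/-- Every vertex is an endpoint of only finitely many edges in `D`. -/
def LocallyFiniteOn (Γ : Multigraph V E) (D : Set E) : Prop :=
  ∀ v, {e ∈ D | Γ.source e = v ∨ Γ.target e = v}.Finite

theorem exists_minimal_boundary_edge (hloc : Γ.LocallyFiniteOn D) {U : Set V} (hU : U.Finite)
    (hv : v ∈ U) (hinf : (Γ.component D v).Infinite) :
    ∃ e, Minimal (fun e => e ∈ D ∧ ¬(Γ.source e ∈ U ↔ Γ.target e ∈ U)) e := by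
  have hfin : {e | e ∈ D ∧ ¬(Γ.source e ∈ U ↔ Γ.target e ∈ U)}.Finite := by
    refine (hU.biUnion fun v _ => hloc v).subset fun e ⟨he, hcross⟩ => ?_
    simp only [Set.mem_iUnion, exists_prop]
    by_cases hsource : Γ.source e ∈ U
    · exact ⟨_, hsource, he, Or.inl rfl⟩
    · have htarget : Γ.target e ∈ U := by
        by_contra htarget
        exact hcross (iff_of_false hsource htarget)
      exact ⟨_, htarget, he, Or.inr rfl⟩
  refine hfin.exists_minimal (Set.nonempty_iff_ne_empty.mpr fun hempty => hinf ?_)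
  refine hU.subset (component_subset hv fun e he => ?_)
  by_contra hcross
  exact hempty.subset ⟨he, hcross⟩

theorem exists_isCut_of_finite_component (hD : IsChain (· ≤ ·) D) (hloc : Γ.LocallyFiniteOn D)
    (hinf : (Γ.component D v).Infinite) (hD₀ : D₀ ⊆ D)
    (hlower : ∀ e ∈ D₀, ∀ f ∈ D, f ≤ e → f ∈ D₀) (hfin : (Γ.component D₀ v).Finite) :
    ∃ e, Γ.IsCut D v e ∧ Γ.componentBelow D e v = Γ.component D₀ v := by
  obtain ⟨e, ⟨he, hcross⟩, hmin⟩ :=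
    exists_minimal_boundary_edge hloc hfin (mem_component_self v) hinf
  have hsub : D₀ ⊆ D ∩ Set.Iio e := fun f hf => by
    have hnle : ¬ e ≤ f := fun hle => hcross (source_mem_component_iff (hlower f hf e he hle))
    exact ⟨hD₀ hf, lt_of_le_not_ge ((hD.total (hD₀ hf) he).resolve_right hnle) hnle⟩
  have heq : Γ.componentBelow D e v = Γ.component D₀ v := by
    refine (component_subset (mem_component_self v) fun f hf => ?_).antisymm (component_mono hsub)
    by_contra hfcross
    exact (Set.mem_Iio.mp hf.2).not_ge (hmin ⟨hf.1, hfcross⟩ (Set.mem_Iio.mp hf.2).le)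
  exact ⟨e, ⟨he, by rwa [heq], by rwa [heq]⟩, heq⟩

theorem IsCut.exists_isCritical_or_exists_isCut (hD : IsChain (· ≤ ·) D)
    (hloc : Γ.LocallyFiniteOn D) (hinf : (Γ.component D v).Infinite) (h : Γ.IsCut D v e) :
    (∃ c, Γ.IsCritical D v c) ∨
      ∃ f, Γ.IsCut D v f ∧ (Γ.componentBelow D e v).ncard < (Γ.componentBelow D f v).ncard := by
  by_cases hfin : (Γ.component (insert e (D ∩ Set.Iio e)) v).Finite
  swap
  · exact Or.inl ⟨e, h.mem, h.finite, hfin⟩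
  have hlower : ∀ g ∈ insert e (D ∩ Set.Iio e), ∀ f ∈ D, f ≤ g →
      f ∈ insert e (D ∩ Set.Iio e) := by
    rintro g hg f hf hle
    have hge : g ≤ e := hg.elim le_of_eq fun hg => le_of_lt hg.2
    exact (eq_or_lt_of_le (hle.trans hge)).imp_right fun hlt => ⟨hf, hlt⟩
  obtain ⟨f, hf, heq⟩ := exists_isCut_of_finite_component hD hloc hinf
    (Set.insert_subset h.mem Set.inter_subset_left) hlower hfin
  refine Or.inr ⟨f, hf, Set.ncard_lt_ncard (ssubset_of_subset_of_ne ?_ fun hne => ?_) hf.finite⟩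
  · rw [heq]
    exact component_mono (Set.subset_insert _ _)
  · rw [heq] at hne
    exact h.not_iff (hne ▸ source_mem_component_iff (Set.mem_insert _ _))

theorem IsCut.ncard_le {M : ℕ} (hM : ∀ e ∈ D, (Γ.componentBelow D e (Γ.source e)).ncard ≤ M ∧
    (Γ.componentBelow D e (Γ.target e)).ncard ≤ M) (h : Γ.IsCut D v e) :
    (Γ.componentBelow D e v).ncard ≤ M := by
  by_cases hsource : Γ.source e ∈ Γ.componentBelow D e v
  · rw [componentBelow, Conn.component_eq hsource]
    exact (hM e h.mem).1
  · have htarget : Γ.target e ∈ Γ.componentBelow D e v := by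
      by_contra htarget
      exact h.not_iff (iff_of_false hsource htarget)
    rw [componentBelow, Conn.component_eq htarget]
    exact (hM e h.mem).2

-- Without a critical edge the finite components below successive cuts would grow indefinitely.
theorem exists_isCritical (hD : IsChain (· ≤ ·) D) (hloc : Γ.LocallyFiniteOn D) {M : ℕ}
    (hM : ∀ e ∈ D, (Γ.componentBelow D e (Γ.source e)).ncard ≤ M ∧
      (Γ.componentBelow D e (Γ.target e)).ncard ≤ M) (hinf : (Γ.component D v).Infinite) :
    ∃ c, Γ.IsCritical D v c := by
  by_contra hnone
  have hgrow : ∀ n : ℕ, ∃ e, Γ.IsCut D v e ∧ n ≤ (Γ.componentBelow D e v).ncard := by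
    intro n
    induction n with
    | zero =>
      have hfin : (Γ.component ∅ v).Finite := (Set.finite_singleton v).subset
        (component_subset (Set.mem_singleton v) fun _ he => he.elim)
      obtain ⟨e, he, -⟩ := exists_isCut_of_finite_component hD hloc hinf
        (Set.empty_subset D) (fun _ he => he.elim) hfin
      exact ⟨e, he, Nat.zero_le _⟩
    | succ n ih =>
      obtain ⟨e, he, hn⟩ := ih
      obtain ⟨f, hf, hlt⟩ :=
        (he.exists_isCritical_or_exists_isCut hD hloc hinf).resolve_left hnone
      exact ⟨f, hf, hn.trans_lt hlt⟩
  obtain ⟨e, he, hn⟩ := hgrow (M + 1)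
  exact absurd (he.ncard_le hM) (by lia)

end Existence

section Subtree

variable {V E : Type*} {Γ : Multigraph V E} {D : Set E}

theorem isSubtree_component (hD : Γ.AcyclicOn D) (v : V) :
    Γ.IsSubtree (Γ.component D v) {e ∈ D | Γ.source e ∈ Γ.component D v} := by
  have hconn : Γ.component D v ⊆
      {w | w ∈ Γ.component D v ∧ Γ.Conn {e ∈ D | Γ.source e ∈ Γ.component D v} v w} := by
    refine component_subset ⟨Conn.refl v, Conn.refl v⟩ fun e he => ?_
    have hends := source_mem_component_iff (Γ := Γ) (v := v) he
    have hedge (h : Γ.source e ∈ Γ.component D v) :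
        Γ.Conn {e ∈ D | Γ.source e ∈ Γ.component D v} (Γ.source e) (Γ.target e) :=
      Conn.edge ⟨he, h⟩
    exact ⟨fun h => ⟨hends.mp h.1, h.2.trans (hedge h.1)⟩,
      fun h => ⟨hends.mpr h.1, h.2.trans (hedge (hends.mpr h.1)).symm⟩⟩
  exact
    { source_mem := fun e he => he.2
      target_mem := fun e he => (source_mem_component_iff he.1).mp he.2
      nonempty := ⟨v, mem_component_self v⟩
      conn := fun u hu w hw => (hconn hu).2.symm.trans (hconn hw).2
      acyclicOn := hD.mono (Set.sep_subset D _) }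

theorem IsSubtree.encard_edges_add_one {W : Set V} (hT : Γ.IsSubtree W D) (hW : W.Finite)
    (hD : D.Finite) : D.encard + 1 = W.encard := by
  let _ : MulAction (Equiv.Perm Empty) V := .compHom V (1 : Equiv.Perm Empty →* Equiv.Perm V)
  let _ : MulAction (Equiv.Perm Empty) E := .compHom E (1 : Equiv.Perm Empty →* Equiv.Perm E)
  have : IsCancelSMul (Equiv.Perm Empty) V :=
    { left_cancel' := fun _ _ _ h => h
      right_cancel' := fun a b _ _ => Subsingleton.elim a b }
  have : Γ.Equivariant (Equiv.Perm Empty) := ⟨fun _ _ => rfl, fun _ _ => rfl⟩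
  have hWinv : IsSMulInvariant (Equiv.Perm Empty) W := fun _ _ hv => hv
  have hDinv : IsSMulInvariant (Equiv.Perm Empty) D := fun _ _ he => he
  have h := orbitCount_edges_add_one hWinv hDinv hT
  rw [orbitCount_of_subsingleton, orbitCount_of_subsingleton, Set.encard_ne_top_iff,
    Set.encard_ne_top_iff, betti_eq_zero_of_finite, Nat.cast_zero, add_zero] at h
  exact h hW hD

end Subtree

section Fibers

variable {V E : Type*} [PartialOrder E] {Γ : Multigraph V E} {D : Set E} {W : Set V}

theorem IsCritical.setOf_eq {v : V} {c : E} (h : Γ.IsCritical D v c) :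
    {w | Γ.IsCritical D w c} = Γ.componentBelow D c v :=
  Set.ext fun _ => ⟨h.mem_of_isCritical, h.of_mem⟩

theorem finite_setOf_isCritical (c : E) : {w | Γ.IsCritical D w c}.Finite := by
  rcases Set.eq_empty_or_nonempty {w | Γ.IsCritical D w c} with hempty | ⟨v, hv⟩
  · rw [hempty]
    exact Set.finite_empty
  · rw [IsCritical.setOf_eq hv]
    exact hv.finite

theorem encard_setOf_isCritical_finiteEnd (hchain : IsChain (· ≤ ·) D) (hacyc : Γ.AcyclicOn D)
    (hloc : Γ.LocallyFiniteOn D) (c : E) :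
    {e ∈ D \ Γ.essentialIn D | Γ.IsCritical D (Γ.finiteEnd D e) c}.encard =
      {w | Γ.IsCritical D w c}.encard := by
  by_cases hc : ∃ v, Γ.IsCritical D v c
  swap
  · simp only [not_exists.mp hc, and_false, Set.ofPred_false, Set.encard_empty]
  obtain ⟨v, h⟩ := hc
  have hfin : {e ∈ D ∩ Set.Iio c | Γ.source e ∈ Γ.componentBelow D c v}.Finite :=
    (h.finite.biUnion fun w _ => hloc w).subset fun e he =>
      Set.mem_biUnion he.2 ⟨he.1.1, Or.inl rfl⟩
  rw [h.fiber_eq hchain, h.setOf_eq, Set.encard_insert_of_notMem fun hc => lt_irrefl c hc.1.2]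
  exact (isSubtree_component (hacyc.mono Set.inter_subset_left) v).encard_edges_add_one
    h.finite hfin

theorem IsSubtree.finiteEnd_mem (hT : Γ.IsSubtree W D) {e : E} (he : e ∈ D) :
    Γ.finiteEnd D e ∈ W := by
  unfold finiteEnd
  split_ifs
  exacts [hT.source_mem e he, hT.target_mem e he]

theorem IsCritical.mem_of_isSubtree {v : V} {c : E} (hT : Γ.IsSubtree W D)
    (h : Γ.IsCritical D v c) : v ∈ W := by
  refine component_subset (hT.finiteEnd_mem h.mem) (fun e he => ?_) h.finiteEnd_mem.symm
  exact iff_of_true (hT.source_mem e he.1) (hT.target_mem e he.1)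

end Fibers

section Action

variable {A V E : Type*} [Group A] [MulAction A V] [MulAction A E] {Γ : Multigraph V E}
  [Γ.Equivariant A]

theorem Conn.smul {D D' : Set E} {u v : V} (a : A) (hD : ∀ e ∈ D, a • e ∈ D')
    (h : Γ.Conn D u v) : Γ.Conn D' (a • u) (a • v) :=
  h.map (fun e _ => Equivariant.source_smul a e) (fun e _ => Equivariant.target_smul a e) hD

variable [IsCancelSMul A V] {D : Set E} {W : Set V}

theorem Equivariant.isCancelSMul_edges (Γ : Multigraph V E) [Γ.Equivariant A] :
    IsCancelSMul A E where
  left_cancel' a _ _ h := MulAction.injective a h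
  right_cancel' a b e h := IsCancelSMul.right_cancel a b (Γ.source e) (by
    rw [← Equivariant.source_smul, ← Equivariant.source_smul, h])

theorem locallyFiniteOn_of_orbitCount_ne_top (hD : orbitCount A D ≠ ⊤) :
    Γ.LocallyFiniteOn D := fun v => by
  have hfiber : ∀ {end' : E → V}, (∀ (a : A) e, end' (a • e) = a • end' e) →
      {e ∈ D | end' e = v}.Finite := fun {end'} hend => by
    refine Set.Finite.of_finite_image (f := MulAction.orbit A)
      ((Set.encard_ne_top_iff.mp hD).subset (Set.image_mono (Set.sep_subset D _))) ?_
    rintro e ⟨-, he⟩ f ⟨-, hf⟩ hef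
    obtain ⟨a, rfl⟩ := MulAction.orbit_eq_iff.mp hef
    have ha : a = 1 := IsCancelSMul.right_cancel a 1 v (by rw [one_smul, ← hf, ← hend, he, hf])
    rw [ha]
    exact one_smul A f
  refine ((hfiber (Equivariant.source_smul (Γ := Γ))).union
    (hfiber (Equivariant.target_smul (Γ := Γ)))).subset ?_
  rintro e ⟨he, h | h⟩
  exacts [Or.inl ⟨he, h⟩, Or.inr ⟨he, h⟩]

section Order

omit [IsCancelSMul A V]

variable [PartialOrder E] [CovariantClass A E HSMul.hSMul LT.lt]

theorem componentBelow_smul (hD : IsSMulInvariant A D) (a : A) (e : E) (v : V) :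
    Γ.componentBelow D (a • e) (a • v) = (a • ·) '' Γ.componentBelow D e v := by
  have hmaps : ∀ (b : A) f, ∀ g ∈ D ∩ Set.Iio f, b • g ∈ D ∩ Set.Iio (b • f) := fun b _ g hg =>
    ⟨hD b g hg.1, smul_strictMono_right b hg.2⟩
  refine Set.Subset.antisymm (fun w hw => ⟨a⁻¹ • w, ?_, smul_inv_smul a w⟩) ?_
  · have hconn := Conn.smul a⁻¹ (hmaps a⁻¹ (a • e)) hw
    rwa [inv_smul_smul, inv_smul_smul] at hconn
  · rintro _ ⟨w, hw, rfl⟩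
    exact hw.smul a (hmaps a e)

theorem finite_componentBelow_smul_iff (hD : IsSMulInvariant A D) {a : A} {e : E} {v : V} :
    (Γ.componentBelow D (a • e) (a • v)).Finite ↔ (Γ.componentBelow D e v).Finite := by
  rw [componentBelow_smul hD, Set.finite_image_iff (MulAction.injective a).injOn]

theorem IsCritical.smul (hD : IsSMulInvariant A D) (a : A) {v : V} {e : E}
    (h : Γ.IsCritical D v e) : Γ.IsCritical D (a • v) (a • e) where
  mem := hD a e h.mem
  finite := (finite_componentBelow_smul_iff hD).mpr h.finite
  infinite := by
    refine (h.infinite.image (MulAction.injective a).injOn).mono ?_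
    rintro _ ⟨w, hw, rfl⟩
    refine hw.smul a ?_
    rintro f (rfl | hf)
    exacts [Or.inl rfl, Or.inr ⟨hD a f hf.1, smul_strictMono_right a hf.2⟩]

theorem smul_mem_essentialIn {D' : Set E} {a : A} {e : E} (hD : ∀ f ∈ D, a • f ∈ D')
    (he : e ∈ Γ.essentialIn D) : a • e ∈ Γ.essentialIn D' := by
  have hinf : ∀ v, (Γ.componentBelow D e v).Infinite →
      (Γ.componentBelow D' (a • e) (a • v)).Infinite := fun v hv =>
    (hv.image (MulAction.injective a).injOn).mono <| Set.image_subset_iff.mpr fun w hw =>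
      hw.smul a fun f hf => ⟨hD f hf.1, smul_strictMono_right a hf.2⟩
  refine ⟨hD e he.1, ?_, ?_⟩
  · rw [Equivariant.source_smul]
    exact hinf _ he.2.1
  · rw [Equivariant.target_smul]
    exact hinf _ he.2.2

theorem isSMulInvariant_essentialIn (hD : IsSMulInvariant A D) :
    IsSMulInvariant A (Γ.essentialIn D) :=
  fun a _ he => smul_mem_essentialIn (hD a) he

theorem finiteEnd_smul (hD : IsSMulInvariant A D) (a : A) (e : E) :
    Γ.finiteEnd D (a • e) = a • Γ.finiteEnd D e := by
  have hiff : (Γ.componentBelow D (a • e) (Γ.source (a • e))).Finite ↔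
      (Γ.componentBelow D e (Γ.source e)).Finite := by
    rw [Equivariant.source_smul, finite_componentBelow_smul_iff hD]
  unfold finiteEnd
  by_cases h : (Γ.componentBelow D e (Γ.source e)).Finite
  · rw [if_pos (hiff.mpr h), if_pos h, Equivariant.source_smul]
  · rw [if_neg (mt hiff.mp h), if_neg h, Equivariant.target_smul]

theorem exists_ncard_componentBelow_le (hD : IsSMulInvariant A D) (hDfin : orbitCount A D ≠ ⊤) :
    ∃ M, ∀ e ∈ D, (Γ.componentBelow D e (Γ.source e)).ncard ≤ M ∧
      (Γ.componentBelow D e (Γ.target e)).ncard ≤ M := by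
  obtain ⟨T, -, hT, hrep⟩ := orbitCount_ne_top_iff.mp hDfin
  obtain ⟨M, hM⟩ := (hT.image fun e => max (Γ.componentBelow D e (Γ.source e)).ncard
    (Γ.componentBelow D e (Γ.target e)).ncard).bddAbove
  refine ⟨M, fun e he => max_le_iff.mp ?_⟩
  obtain ⟨f, hf, a, rfl⟩ := hrep e he
  simp only [Equivariant.source_smul, Equivariant.target_smul, componentBelow_smul hD,
    Set.ncard_image_of_injective _ (MulAction.injective a)]
  exact hM (Set.mem_image_of_mem _ hf)

end Order

variable [PartialOrder E] [CovariantClass A E HSMul.hSMul LT.lt]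

theorem orbitCount_diff_essentialIn (hD : IsSMulInvariant A D) (hW : IsSMulInvariant A W)
    (hT : Γ.IsSubtree W D) (hchain : IsChain (· ≤ ·) D) (hDfin : orbitCount A D ≠ ⊤)
    (hinf : W.Infinite) : orbitCount A (D \ Γ.essentialIn D) = orbitCount A W := by
  have := Equivariant.isCancelSMul_edges (A := A) Γ
  have hloc := locallyFiniteOn_of_orbitCount_ne_top (Γ := Γ) hDfin
  obtain ⟨M, hM⟩ := exists_ncard_componentBelow_le (Γ := Γ) hD hDfin
  have hexists : ∀ v ∈ W, ∃ c, Γ.IsCritical D v c := fun v hv =>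
    exists_isCritical hchain hloc hM (hinf.mono fun w hw => hT.conn v hv w hw)
  obtain ⟨v₀, hv₀⟩ := hT.nonempty
  have : Nonempty V := ⟨v₀⟩
  have : Nonempty E := ⟨(hexists v₀ hv₀).choose⟩
  choose! crit hcrit using hexists
  have hcrit_iff : ∀ v ∈ W, ∀ c, crit v = c ↔ Γ.IsCritical D v c := fun v hv c =>
    ⟨fun h => h ▸ hcrit v hv, (hcrit v hv).unique hchain⟩
  have hcrit_smul : ∀ a : A, ∀ v ∈ W, crit (a • v) = a • crit v := fun a v hv =>
    (hcrit_iff _ (hW a v hv) _).mpr ((hcrit v hv).smul hD a)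
  have hedges : ∀ c, {e ∈ D \ Γ.essentialIn D | crit (Γ.finiteEnd D e) = c} =
      {e ∈ D \ Γ.essentialIn D | Γ.IsCritical D (Γ.finiteEnd D e) c} := fun c =>
    Set.ext fun e => and_congr_right fun he => hcrit_iff _ (hT.finiteEnd_mem he.1) c
  have hvertices : ∀ c, {v ∈ W | crit v = c} = {v | Γ.IsCritical D v c} := fun c =>
    Set.ext fun v => ⟨fun h => (hcrit_iff v h.1 c).mp h.2,
      fun h => ⟨h.mem_of_isSubtree hT, (hcrit_iff v (h.mem_of_isSubtree hT) c).mpr h⟩⟩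
  have hcard := fun c => encard_setOf_isCritical_finiteEnd hchain hT.acyclicOn hloc c
  refine orbitCount_eq_of_fibers (π := fun e => crit (Γ.finiteEnd D e))
    (hD.diff (isSMulInvariant_essentialIn hD)) (fun a e he => ?_) hW hcrit_smul
    (fun c => ?_) fun c => ?_
  · rw [finiteEnd_smul hD, hcrit_smul a _ (hT.finiteEnd_mem he.1)]
  · rw [hedges, ← Set.encard_ne_top_iff, hcard, Set.encard_ne_top_iff]
    exact finite_setOf_isCritical c
  · rw [hedges, hvertices, hcard]

theorem orbitCount_essentialIn_add_one (hD : IsSMulInvariant A D) (hW : IsSMulInvariant A W)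
    (hT : Γ.IsSubtree W D) (hchain : IsChain (· ≤ ·) D) (hDfin : orbitCount A D ≠ ⊤)
    (hWfin : orbitCount A W ≠ ⊤) (hinf : W.Infinite) :
    orbitCount A (Γ.essentialIn D) + 1 = betti A := by
  have hsplit := orbitCount_diff_add_orbitCount (A := A) (Set.sep_subset D _)
    (isSMulInvariant_essentialIn (Γ := Γ) hD)
  rw [← essentialIn, orbitCount_diff_essentialIn hD hW hT hchain hDfin hinf] at hsplit
  have heuler := orbitCount_edges_add_one hW hD hT hWfin hDfin
  rw [← hsplit, add_assoc] at heuler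
  exact WithTop.add_left_cancel hWfin heuler

end Action

end Multigraph

/-! ### Ordered forests -/

section OrderedForests

variable {V E : Type*} [PartialOrder E]

/-- The edges that are essential in some `A`-cocompact subgraph of `Γ`. -/
def essentialEdges (A : Type*) {V E : Type*} [Group A] [MulAction A E] [PartialOrder E]
    (Γ : Multigraph V E) : Set E :=
  {e | ∃ D, IsSMulInvariant A D ∧ orbitCount A D ≠ ⊤ ∧ e ∈ Γ.essentialIn D}

theorem essentialEdges_eq_empty_of_finite (A : Type*) [Group A] [Finite A]
    [MulAction A E] (Γ : Multigraph V E) : essentialEdges A Γ = ∅ := by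
  refine Set.eq_empty_iff_forall_notMem.mpr fun e ⟨D, _, hDfin, he⟩ => he.2.1 ?_
  obtain ⟨T, -, hT, hrep⟩ := orbitCount_ne_top_iff.mp hDfin
  have hD : D.Finite := (hT.biUnion fun y _ => Set.finite_range fun a : A => a • y).subset
    fun f hf => by
      obtain ⟨y, hy, hfy⟩ := hrep f hf
      exact Set.mem_biUnion hy hfy
  refine (((hD.image Γ.source).union (hD.image Γ.target)).insert (Γ.source e)).subset
    (Multigraph.component_subset (Set.mem_insert _ _) fun f hf => ?_)
  exact iff_of_true (Or.inr (Or.inl (Set.mem_image_of_mem _ hf.1)))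
    (Or.inr (Or.inr (Set.mem_image_of_mem _ hf.1)))

/-- `Γ` is a forest whose trees are indexed by `ι`, the tree of a vertex being given by `κ`, with
edges ordered in such a way that any two edges of the same tree are comparable. -/
structure IsOrderedForest {ι : Type*} (Γ : Multigraph V E) (κ : V → ι) : Prop where
  acyclicOn : Γ.AcyclicOn Set.univ
  conn_iff : ∀ u v, Γ.Conn Set.univ u v ↔ κ u = κ v
  surjective : Function.Surjective κ
  le_or_le : ∀ e f, κ (Γ.source e) = κ (Γ.source f) → e ≤ f ∨ f ≤ e

/-- `W` and `D` are the vertex set and the edge set of a subtree of `Γ` on which `A` acts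
cocompactly. -/
structure IsCocompactSubtree (A : Type*) [Group A] [MulAction A V] [MulAction A E]
    (Γ : Multigraph V E) (W : Set V) (D : Set E) : Prop extends Γ.IsSubtree W D where
  isSMulInvariant_vertices : IsSMulInvariant A W
  isSMulInvariant_edges : IsSMulInvariant A D
  orbitCount_vertices_ne_top : orbitCount A W ≠ ⊤
  orbitCount_edges_ne_top : orbitCount A D ≠ ⊤

variable {A : Type*} [Group A] [MulAction A V] [MulAction A E] {Γ : Multigraph V E}
  [Γ.Equivariant A]

theorem smul_mem_essentialEdges {B C : Type*} [Group B] [MulAction B E] [Group C] [MulAction C E]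
    [CovariantClass A E HSMul.hSMul LT.lt] {a : A}
    (ha : ∀ (b : B) (e : E), ∃ c : C, a • b • e = c • a • e) {e : E}
    (he : e ∈ essentialEdges B Γ) : a • e ∈ essentialEdges C Γ := by
  obtain ⟨D, -, hDfin, heD⟩ := he
  obtain ⟨T, -, hT, hrep⟩ := orbitCount_ne_top_iff.mp hDfin
  refine ⟨saturation C ((a • ·) '' T), isSMulInvariant_saturation _,
    orbitCount_saturation_ne_top (hT.image _), Multigraph.smul_mem_essentialIn (fun f hf => ?_) heD⟩
  obtain ⟨y, hy, b, rfl⟩ := hrep f hf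
  obtain ⟨c, hc⟩ := ha b y
  exact ⟨a • y, Set.mem_image_of_mem _ hy, c, hc.symm⟩

theorem isSMulInvariant_essentialEdges [CovariantClass A E HSMul.hSMul LT.lt] :
    IsSMulInvariant A (essentialEdges A Γ) :=
  fun _ _ ⟨D, hD, hDfin, he⟩ => ⟨D, hD, hDfin, Multigraph.isSMulInvariant_essentialIn hD _ _ he⟩

theorem essentialEdges_subgroup [IsCancelSMul A E] [CovariantClass A E HSMul.hSMul LT.lt]
    (N : Subgroup A) [N.FiniteIndex] : essentialEdges N Γ = essentialEdges A Γ := by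
  refine Set.Subset.antisymm (fun e he => ?_) fun e ⟨D, hD, hDfin, he⟩ =>
    ⟨D, fun n => hD n, ?_, he⟩
  · rw [← one_smul A e]
    exact smul_mem_essentialEdges (B := N) (C := A) (fun n f => ⟨n, by
      rw [one_smul, one_smul, Subgroup.smul_def]⟩) he
  · rw [orbitCount_subgroup N hD]
    exact WithTop.mul_ne_top (ENat.natCast_ne_top _) hDfin

section Subtrees

omit [PartialOrder E]

variable {v₀ : V}

theorem exists_finite_forall_conn_smul [Group.FG A]
    (hconn : ∀ a : A, Γ.Conn Set.univ v₀ (a • v₀)) :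
    ∃ T : Set E, T.Finite ∧
      ∀ C, IsSMulInvariant A C → T ⊆ C → ∀ a : A, Γ.Conn C v₀ (a • v₀) := by
  obtain ⟨Y, hY⟩ := Group.fg_def.mp ‹Group.FG A›
  choose path _ hpath_finite hpath using fun a => (hconn a).exists_finite
  refine ⟨⋃ y ∈ Y, path y, Y.finite_toSet.biUnion fun y _ => hpath_finite y,
    fun C hC hTC a => ?_⟩
  have ha : a ∈ Subgroup.closure (Y : Set A) := hY ▸ Subgroup.mem_top a
  induction ha using Subgroup.closure_induction with
  | mem y hy => exact (hpath y).mono ((Set.subset_biUnion_of_mem (u := path) hy).trans hTC)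
  | one =>
    rw [one_smul]
    exact Multigraph.Conn.refl v₀
  | mul x y _ _ ihx ihy =>
    rw [mul_smul]
    exact ihx.trans (ihy.smul x (hC x))
  | inv x _ ih =>
    have h := ih.smul x⁻¹ (hC x⁻¹)
    rw [inv_smul_smul] at h
    exact h.symm

theorem isCocompactSubtree_component {C : Set E} (hacyc : Γ.AcyclicOn C)
    (hC : IsSMulInvariant A C) (hCfin : orbitCount A C ≠ ⊤)
    (hconn : ∀ a : A, Γ.Conn C v₀ (a • v₀)) :
    IsCocompactSubtree A Γ (Γ.component C v₀) {e ∈ C | Γ.source e ∈ Γ.component C v₀} := by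
  have hinv : IsSMulInvariant A (Γ.component C v₀) := fun a v hv =>
    (hconn a).trans (Multigraph.Conn.smul a (hC a) hv)
  obtain ⟨T, -, hT, hrep⟩ := orbitCount_ne_top_iff.mp hCfin
  have hsub : Γ.component C v₀ ⊆ saturation A (insert v₀ (Γ.source '' T ∪ Γ.target '' T)) := by
    refine Multigraph.component_subset (subset_saturation _ (Set.mem_insert _ _)) fun e he => ?_
    obtain ⟨f, hf, a, rfl⟩ := hrep e he
    exact iff_of_true
      ⟨Γ.source f, Or.inr (Or.inl ⟨f, hf, rfl⟩), a, (Multigraph.Equivariant.source_smul a f).symm⟩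
      ⟨Γ.target f, Or.inr (Or.inr ⟨f, hf, rfl⟩), a, (Multigraph.Equivariant.target_smul a f).symm⟩
  exact
    { toIsSubtree := Multigraph.isSubtree_component hacyc v₀
      isSMulInvariant_vertices := hinv
      isSMulInvariant_edges := fun a e he => ⟨hC a e he.1, by
        rw [Multigraph.Equivariant.source_smul]
        exact hinv a _ he.2⟩
      orbitCount_vertices_ne_top := ne_top_of_le_ne_top
        (orbitCount_saturation_ne_top (((hT.image _).union (hT.image _)).insert v₀))
        (orbitCount_mono hsub)
      orbitCount_edges_ne_top := ne_top_of_le_ne_top hCfin (orbitCount_mono (Set.sep_subset _ _)) }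

theorem exists_isCocompactSubtree [Group.FG A] (hacyc : Γ.AcyclicOn Set.univ)
    (hconn : ∀ a : A, Γ.Conn Set.univ v₀ (a • v₀)) {D₀ : Set E}
    (hD₀fin : orbitCount A D₀ ≠ ⊤) (hD₀conn : ∀ e ∈ D₀, Γ.Conn Set.univ v₀ (Γ.source e)) :
    ∃ W D, IsCocompactSubtree A Γ W D ∧ v₀ ∈ W ∧ D₀ ⊆ D := by
  obtain ⟨T, hT, hTconn⟩ := exists_finite_forall_conn_smul hconn
  obtain ⟨R, hRD, hR, hrep⟩ := orbitCount_ne_top_iff.mp hD₀fin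
  choose! path _ hpath_finite hpath using fun e he => (hD₀conn e he).exists_finite
  let C := saturation A (T ∪ R ∪ ⋃ e ∈ R, path e)
  have hC : IsSMulInvariant A C := isSMulInvariant_saturation _
  have hCfin : orbitCount A C ≠ ⊤ := orbitCount_saturation_ne_top
    ((hT.union hR).union (hR.biUnion fun e he => hpath_finite e (hRD he)))
  have hbase : ∀ {f}, f ∈ T ∪ R ∪ ⋃ e ∈ R, path e → f ∈ C := fun hf => subset_saturation _ hf
  have horbit := hTconn C hC fun f hf => hbase (Or.inl (Or.inl hf))
  refine ⟨_, _, isCocompactSubtree_component (hacyc.mono (Set.subset_univ C)) hC hCfin horbit,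
    Multigraph.mem_component_self v₀, fun e he => ?_⟩
  obtain ⟨f, hf, a, rfl⟩ := hrep e he
  have hfconn : Γ.Conn C v₀ (Γ.source f) := (hpath f (hRD hf)).mono fun g hg =>
    hbase (Or.inr (Set.mem_biUnion hf hg))
  refine ⟨hC a f (hbase (Or.inl (Or.inr hf))), ?_⟩
  rw [Multigraph.Equivariant.source_smul]
  exact (horbit a).trans (hfconn.smul a (hC a))

end Subtrees

section Counting

variable {ι : Type*} {κ : V → ι} [IsCancelSMul A V] [CovariantClass A E HSMul.hSMul LT.lt]

theorem IsOrderedForest.apply_source_eq_target (hΓ : IsOrderedForest Γ κ) (e : E) :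
    κ (Γ.source e) = κ (Γ.target e) :=
  (hΓ.conn_iff _ _).mp (Multigraph.Conn.edge (Set.mem_univ e))

theorem IsOrderedForest.mem_essentialIn_sep (hΓ : IsOrderedForest Γ κ) {D : Set E} {e : E}
    (he : e ∈ Γ.essentialIn D) :
    e ∈ Γ.essentialIn {f ∈ D | κ (Γ.source f) = κ (Γ.source e)} := by
  have hbelow : ∀ v, κ v = κ (Γ.source e) → Γ.componentBelow D e v ⊆
      Γ.componentBelow {f ∈ D | κ (Γ.source f) = κ (Γ.source e)} e v := fun v hv w hw => by
    refine (Multigraph.component_subset (W := {u | κ u = κ (Γ.source e) ∧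
      u ∈ Γ.componentBelow {f ∈ D | κ (Γ.source f) = κ (Γ.source e)} e v})
      ⟨hv, Multigraph.mem_component_self v⟩ (fun f hf => ?_) hw).2
    refine and_congr_left' (by rw [hΓ.apply_source_eq_target f]) |>.trans
      (and_congr_right fun hκ => Multigraph.source_mem_component_iff ⟨⟨hf.1, ?_⟩, hf.2⟩)
    rw [hΓ.apply_source_eq_target, hκ]
  exact ⟨⟨he.1, rfl⟩, he.2.1.mono (hbelow _ rfl),
    he.2.2.mono (hbelow _ (hΓ.apply_source_eq_target e).symm)⟩

theorem IsOrderedForest.isChain_of_isSubtree (hΓ : IsOrderedForest Γ κ) {W : Set V} {D : Set E}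
    (hT : Γ.IsSubtree W D) : IsChain (· ≤ ·) D := fun e he f hf _ =>
  hΓ.le_or_le e f <| (hΓ.conn_iff _ _).mp <|
    (hT.conn _ (hT.source_mem e he) _ (hT.source_mem f hf)).mono (Set.subset_univ D)

theorem IsOrderedForest.orbitCount_essentialIn_add_one [Infinite A] (hΓ : IsOrderedForest Γ κ)
    {W : Set V} {D : Set E} (hT : IsCocompactSubtree A Γ W D) :
    orbitCount A (Γ.essentialIn D) + 1 = betti A := by
  obtain ⟨v₀, hv₀⟩ := hT.nonempty
  have hinj : Function.Injective fun a : A => a • v₀ := fun a b h =>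
    IsCancelSMul.right_cancel a b v₀ h
  exact Multigraph.orbitCount_essentialIn_add_one hT.isSMulInvariant_edges
    hT.isSMulInvariant_vertices hT.toIsSubtree (hΓ.isChain_of_isSubtree hT.toIsSubtree)
    hT.orbitCount_edges_ne_top hT.orbitCount_vertices_ne_top
    ((Set.infinite_range_of_injective hinj).mono
      (Set.range_subset_iff.mpr fun a => hT.isSMulInvariant_vertices a v₀ hv₀))

theorem IsOrderedForest.essentialIn_eq_of_subset [Infinite A] (hΓ : IsOrderedForest Γ κ)
    {W W' : Set V} {D D' : Set E} (hT : IsCocompactSubtree A Γ W D)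
    (hT' : IsCocompactSubtree A Γ W' D') (hD : D ⊆ D') : Γ.essentialIn D = Γ.essentialIn D' := by
  have hcount := hΓ.orbitCount_essentialIn_add_one hT
  refine eq_of_orbitCount_le (Multigraph.isSMulInvariant_essentialIn hT.isSMulInvariant_edges)
    (Multigraph.essentialIn_mono hD) ?_ fun htop => ?_
  · rw [← hΓ.orbitCount_essentialIn_add_one hT'] at hcount
    exact (WithTop.add_right_cancel ENat.one_ne_top hcount).ge
  · rw [htop, top_add] at hcount
    exact ENat.natCast_ne_top _ hcount.symm

theorem IsOrderedForest.essentialEdges_sep_eq [Group.FG A] [Infinite A]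
    (hΓ : IsOrderedForest Γ κ) (hκ : ∀ (a : A) v, κ (a • v) = κ v) {W : Set V} {D : Set E}
    (hT : IsCocompactSubtree A Γ W D) {v₀ : V} (hv₀ : v₀ ∈ W) :
    {e ∈ essentialEdges A Γ | κ (Γ.source e) = κ v₀} = Γ.essentialIn D := by
  have hκD : ∀ e ∈ D, κ (Γ.source e) = κ v₀ := fun e he => (hΓ.conn_iff _ _).mp
    ((hT.conn _ (hT.source_mem e he) v₀ hv₀).mono (Set.subset_univ D))
  refine Set.Subset.antisymm ?_ fun e he =>
    ⟨⟨D, hT.isSMulInvariant_edges, hT.orbitCount_edges_ne_top, he⟩, hκD e he.1⟩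
  rintro e ⟨⟨C, -, hCfin, he⟩, hev₀⟩
  have he' := hΓ.mem_essentialIn_sep he
  obtain ⟨W', D', hT', -, hsub⟩ := exists_isCocompactSubtree (A := A) (v₀ := v₀)
    (D₀ := D ∪ {f ∈ C | κ (Γ.source f) = κ (Γ.source e)}) hΓ.acyclicOn
    (fun a => (hΓ.conn_iff _ _).mpr (hκ a v₀).symm)
    (orbitCount_union_ne_top hT.orbitCount_edges_ne_top
      (ne_top_of_le_ne_top hCfin (orbitCount_mono (Set.sep_subset _ _))))
    (by
      rintro f (hf | hf)
      · exact (hΓ.conn_iff _ _).mpr (hκD f hf).symm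
      · exact (hΓ.conn_iff _ _).mpr (hf.2.trans hev₀).symm)
  rw [hΓ.essentialIn_eq_of_subset hT hT' (Set.subset_union_left.trans hsub)]
  exact Multigraph.essentialIn_mono (Set.subset_union_right.trans hsub) he'

theorem IsOrderedForest.orbitCount_essentialEdges_sep_add_one [Group.FG A] [Infinite A]
    (hΓ : IsOrderedForest Γ κ) (hκ : ∀ (a : A) v, κ (a • v) = κ v) (i : ι) :
    orbitCount A {e ∈ essentialEdges A Γ | κ (Γ.source e) = i} + 1 = betti A := by
  obtain ⟨v₀, rfl⟩ := hΓ.surjective i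
  obtain ⟨W, D, hT, hv₀, -⟩ := exists_isCocompactSubtree (A := A) (D₀ := ∅) hΓ.acyclicOn
    (fun a => (hΓ.conn_iff v₀ _).mpr (hκ a v₀).symm)
    (by simp only [orbitCount, Set.image_empty, Set.encard_empty, ne_eq, ENat.zero_ne_top,
      not_false_eq_true]) (fun _ he => he.elim)
  rw [hΓ.essentialEdges_sep_eq hκ hT hv₀, hΓ.orbitCount_essentialIn_add_one hT]

theorem IsOrderedForest.orbitCount_essentialEdges [Group.FG A] [Finite ι]
    (hΓ : IsOrderedForest Γ κ) (hκ : ∀ (a : A) v, κ (a • v) = κ v) :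
    orbitCount A (essentialEdges A Γ) = Nat.card ι * (betti A - 1 : ℕ) := by
  cases finite_or_infinite A
  · rw [essentialEdges_eq_empty_of_finite, betti_eq_zero_of_finite]
    simp [orbitCount]
  have hcomponent : ∀ i, orbitCount A {e ∈ essentialEdges A Γ | κ (Γ.source e) = i} =
      (betti A - 1 : ℕ) := fun i => by
    have hcount := hΓ.orbitCount_essentialEdges_sep_add_one hκ i
    rw [ENat.natCast_sub, ← hcount, Nat.cast_one,
      (ENat.addLECancellable_of_ne_top ENat.one_ne_top).add_tsub_cancel_right]
  have := Fintype.ofFinite ι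
  rw [orbitCount_eq_finsum_of_invariant (κ := fun e => κ (Γ.source e)) fun a e => by
    rw [Multigraph.Equivariant.source_smul, hκ]]
  simp only [hcomponent, finsum_eq_sum_of_fintype, Finset.sum_const, Finset.card_univ,
    nsmul_eq_mul, Nat.card_eq_fintype_card]

end Counting

end OrderedForests

/-! ### Left orders on locally indicable groups -/

section LeftOrder

variable {G : Type*} [Group G]

/-- Every nontrivial finitely generated subgroup of `G` maps onto an infinite cyclic group. -/
def IsLocallyIndicable (G : Type*) [Group G] : Prop :=
  ∀ H : Subgroup G, H.FG → H ≠ ⊥ → ∃ φ : H →* Multiplicative ℤ, φ ≠ 1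

theorem isLocallyIndicable_of_isFreeGroup (G : Type*) [Group G] [IsFreeGroup G] :
    IsLocallyIndicable G := fun H _ hH => by
  have : Nontrivial H := (Subgroup.nontrivial_iff_ne_bot H).mpr hH
  obtain ⟨x⟩ : Nonempty (IsFreeGroup.Generators H) := by
    by_contra hempty
    have := not_nonempty_iff.mp hempty
    exact not_subsingleton H (IsFreeGroup.toFreeGroup H).injective.subsingleton
  refine ⟨IsFreeGroup.lift fun _ => Multiplicative.ofAdd 1, fun h => ?_⟩
  have hx := DFunLike.congr_fun h (IsFreeGroup.of x)
  rw [IsFreeGroup.lift_of, MonoidHom.one_apply] at hx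
  exact absurd hx (by decide)

theorem one_notMem_closure_of_hom {H : Subgroup G} (φ : H →* Multiplicative ℤ) {T : Set G}
    (hT : ∀ t ∈ T, ∃ ht : t ∈ H, 1 ≤ φ ⟨t, ht⟩)
    (hker : 1 ∉ Subsemigroup.closure {t ∈ T | ∃ ht : t ∈ H, φ ⟨t, ht⟩ = 1}) :
    1 ∉ Subsemigroup.closure T := by
  have hpos : ∀ x ∈ Subsemigroup.closure T, ∃ hx : x ∈ H, 1 < φ ⟨x, hx⟩ ∨ φ ⟨x, hx⟩ = 1 ∧
      x ∈ Subsemigroup.closure {t ∈ T | ∃ ht : t ∈ H, φ ⟨t, ht⟩ = 1} := fun x hx => by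
    induction hx using Subsemigroup.closure_induction with
    | mem t ht =>
      obtain ⟨htH, hle⟩ := hT t ht
      exact ⟨htH, hle.lt_or_eq.imp_right fun h =>
        ⟨h.symm, Subsemigroup.subset_closure ⟨ht, htH, h.symm⟩⟩⟩
    | mul x y _ _ ihx ihy =>
      obtain ⟨hxH, hx⟩ := ihx
      obtain ⟨hyH, hy⟩ := ihy
      have hmul : φ ⟨x * y, mul_mem hxH hyH⟩ = φ ⟨x, hxH⟩ * φ ⟨y, hyH⟩ :=
        map_mul φ ⟨x, hxH⟩ ⟨y, hyH⟩
      refine ⟨mul_mem hxH hyH, ?_⟩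
      rw [hmul]
      rcases hx with hx | ⟨hx, hx'⟩ <;> rcases hy with hy | ⟨hy, hy'⟩
      · exact Or.inl (one_lt_mul'' hx hy)
      · exact Or.inl (by rwa [hy, mul_one])
      · exact Or.inl (by rwa [hx, one_mul])
      · exact Or.inr ⟨by rw [hx, hy, mul_one], mul_mem hx' hy'⟩
  intro hone
  obtain ⟨h, hlt | ⟨-, hmem⟩⟩ := hpos 1 hone
  · exact hlt.ne (map_one φ).symm
  · exact hker hmem

theorem exists_mem_apply_ne_one {S : Set G} {M : Type*} [Monoid M]
    {φ : Subgroup.closure S →* M} (hφ : φ ≠ 1) :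
    ∃ (g : G) (hg : g ∈ S), φ ⟨g, Subgroup.subset_closure hg⟩ ≠ 1 := by
  contrapose! hφ
  exact MonoidHom.eq_of_eqOn_dense (Subgroup.closure_closure_coe_preimage (k := S))
    fun g hg => hφ g hg

theorem exists_sign_one_le_zpow (a : Multiplicative ℤ) (δ : ℤˣ) :
    ∃ ε : ℤˣ, 1 ≤ a ^ (ε : ℤ) ∧ (a = 1 → ε = δ) := by
  rcases lt_trichotomy a 1 with ha | ha | ha
  · refine ⟨-1, ?_, fun h => absurd h ha.ne⟩
    rw [Units.val_neg, Units.val_one, zpow_neg_one]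
    exact (one_lt_inv'.mpr ha).le
  · exact ⟨δ, by rw [ha, one_zpow], fun _ => rfl⟩
  · exact ⟨1, by rw [Units.val_one, zpow_one]; exact ha.le, fun h => absurd h ha.ne'⟩

theorem exists_signs_of_hom {H : Subgroup G} (φ : H →* Multiplicative ℤ) {S : Set G}
    (hS : S ⊆ H) {ε' : G → ℤˣ}
    (hε' : 1 ∉ Subsemigroup.closure
      ((fun g => g ^ (ε' g : ℤ)) '' {g ∈ S | ∃ hg : g ∈ H, φ ⟨g, hg⟩ = 1})) :
    ∃ ε : G → ℤˣ, 1 ∉ Subsemigroup.closure ((fun g => g ^ (ε g : ℤ)) '' S) := by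
  have hsign : ∀ g : G, ∃ ε : ℤˣ, ∀ hg : g ∈ H,
      1 ≤ φ ⟨g, hg⟩ ^ (ε : ℤ) ∧ (φ ⟨g, hg⟩ = 1 → ε = ε' g) := fun g => by
    by_cases hg : g ∈ H
    · exact (exists_sign_one_le_zpow (φ ⟨g, hg⟩) (ε' g)).imp fun _ h _ => h
    · exact ⟨1, fun h => absurd h hg⟩
  choose ε hε using hsign
  have hzpow : ∀ {g} (hg : g ∈ H), φ ⟨g ^ (ε g : ℤ), zpow_mem hg _⟩ = φ ⟨g, hg⟩ ^ (ε g : ℤ) :=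
    fun {g} hg => map_zpow φ ⟨g, hg⟩ _
  refine ⟨ε, one_notMem_closure_of_hom φ ?_ fun hone => hε' (Subsemigroup.closure_mono ?_ hone)⟩
  · rintro _ ⟨g, hg, rfl⟩
    exact ⟨zpow_mem (hS hg) _, (hzpow (hS hg)).symm ▸ (hε g (hS hg)).1⟩
  · rintro _ ⟨⟨g, hg, rfl⟩, _, hone'⟩
    have hφg : φ ⟨g, hS hg⟩ = 1 := by
      rw [hzpow (hS hg)] at hone'
      rcases Int.units_eq_one_or (ε g) with h | h <;> simpa [h] using hone'
    exact ⟨g, ⟨hg, hS hg, hφg⟩,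
      congrArg (fun δ : ℤˣ => g ^ (δ : ℤ)) ((hε g (hS hg)).2 hφg).symm⟩

theorem IsLocallyIndicable.exists_signs (hG : IsLocallyIndicable G) (S : Finset G)
    (hS : (1 : G) ∉ S) :
    ∃ ε : G → ℤˣ, 1 ∉ Subsemigroup.closure ((fun g => g ^ (ε g : ℤ)) '' (S : Set G)) := by
  classical
  induction S using Finset.strongInduction with
  | H S ih =>
  rcases S.eq_empty_or_nonempty with rfl | ⟨g₀, hg₀⟩
  · refine ⟨1, ?_⟩
    rw [Finset.coe_empty, Set.image_empty, Subsemigroup.closure_empty]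
    exact Subsemigroup.notMem_bot
  obtain ⟨φ, hφ⟩ := hG (Subgroup.closure S) ⟨S, rfl⟩ fun h =>
    hS ((Subgroup.closure_eq_bot_iff.mp h hg₀).out ▸ hg₀)
  obtain ⟨k, hk, hφk⟩ := exists_mem_apply_ne_one hφ
  obtain ⟨ε', hε'⟩ := ih (S.filter fun g => ∃ hg : g ∈ Subgroup.closure (S : Set G), φ ⟨g, hg⟩ = 1)
    (Finset.filter_ssubset.mpr ⟨k, hk, fun ⟨_, h⟩ => hφk h⟩)
    fun h => hS (Finset.mem_filter.mp h).1
  refine exists_signs_of_hom φ Subgroup.subset_closure (ε' := ε') ?_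
  rwa [Finset.coe_filter] at hε'

-- The Burns–Hale theorem: compactness turns the signs on finite sets into a positive cone.
theorem IsLocallyIndicable.exists_positiveCone (hG : IsLocallyIndicable G) :
    ∃ P : Subsemigroup G, 1 ∉ P ∧ ∀ g ≠ 1, g ∈ P ∨ g⁻¹ ∈ P := by
  classical
  choose ε hε using fun S : Finset G => hG.exists_signs (S.erase 1) (Finset.notMem_erase 1 S)
  let Q : Finset G → Subsemigroup G := fun S =>
    Subsemigroup.closure ((fun g => g ^ (ε S g : ℤ)) '' (S.erase 1 : Set G))
  have hQ : ∀ S, 1 ∉ Q S := hε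
  have hmem : ∀ {S g}, g ≠ 1 → g ∈ S → g ^ (ε S g : ℤ) ∈ Q S := fun hg hgS =>
    Subsemigroup.subset_closure ⟨_, Finset.mem_coe.mpr (Finset.mem_erase.mpr ⟨hg, hgS⟩), rfl⟩
  have hpos : ∀ {S g}, g ≠ 1 → g ∈ S → ε S g = 1 → g ∈ Q S := fun {S g} hg hgS h => by
    simpa [h] using hmem hg hgS
  have hneg : ∀ {S g}, g ≠ 1 → g ∈ S → ε S g ≠ 1 → g⁻¹ ∈ Q S := fun {S g} hg hgS h => by
    simpa [(Int.units_eq_one_or (ε S g)).resolve_left h] using hmem hg hgS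
  have hinv : ∀ {S g}, g ∈ Q S → g⁻¹ ∉ Q S := fun {S g} h h' =>
    hQ S (by simpa only [mul_inv_cancel] using mul_mem h h')
  obtain ⟨χ, hχ⟩ := Finset.rado_selection ε
  refine ⟨⟨{g | g ≠ 1 ∧ χ g = 1}, ?_⟩, fun h => h.1 rfl, fun g hg => ?_⟩
  · rintro a b ⟨ha, ha'⟩ ⟨hb, hb'⟩
    obtain ⟨S, hS, hSχ⟩ := hχ {a, b, a * b}
    simp only [Finset.insert_subset_iff, Finset.singleton_subset_iff] at hS
    simp only [Finset.mem_insert, Finset.mem_singleton, forall_eq_or_imp, forall_eq] at hSχ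
    have hab : a * b ∈ Q S :=
      mul_mem (hpos ha hS.1 (hSχ.1 ▸ ha')) (hpos hb hS.2.1 (hSχ.2.1 ▸ hb'))
    have hne : a * b ≠ 1 := fun h => hQ S (by rwa [h] at hab)
    exact ⟨hne, by_contra fun h => hinv hab (hneg hne hS.2.2 (hSχ.2.2 ▸ h))⟩
  · by_contra! hcon
    obtain ⟨S, hS, hSχ⟩ := hχ {g, g⁻¹}
    simp only [Finset.insert_subset_iff, Finset.singleton_subset_iff] at hS
    simp only [Finset.mem_insert, Finset.mem_singleton, forall_eq_or_imp, forall_eq] at hSχ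
    have hg' : g⁻¹ ≠ 1 := inv_ne_one.mpr hg
    exact hinv (hneg hg hS.1 fun h => hcon.1 ⟨hg, hSχ.1.trans h⟩)
      (hneg hg' hS.2 fun h => hcon.2 ⟨hg', hSχ.2.trans h⟩)

end LeftOrder

/-! ### Cayley graphs -/

/-- An edge of a Cayley graph of `G`, given by its starting point and its label. -/
@[ext]
structure CayleyEdge (G X : Type*) where
  base : G
  label : X

section Cayley

variable {G X : Type*} [Group G]

instance : MulAction G (CayleyEdge G X) where
  smul g e := ⟨g * e.base, e.label⟩
  one_smul _ := CayleyEdge.ext (one_mul _) rfl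
  mul_smul _ _ _ := CayleyEdge.ext (mul_assoc _ _ _) rfl

theorem CayleyEdge.smul_base (g : G) (e : CayleyEdge G X) : (g • e).base = g * e.base := rfl

/-- The Cayley graph of `G` with respect to a family `ψ`, which need not generate `G`: the edges
labelled `x` join `g` to `g * ψ x`. -/
def cayleyGraph (ψ : X → G) : Multigraph G (CayleyEdge G X) where
  source := CayleyEdge.base
  target e := e.base * ψ e.label

instance (ψ : X → G) : (cayleyGraph ψ).Equivariant G where
  source_smul _ _ := rfl
  target_smul _ _ := mul_assoc _ _ _

theorem conn_cayleyGraph_mul (ψ : X → G) {h : G} (hh : h ∈ Subgroup.closure (Set.range ψ))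
    (g : G) : (cayleyGraph ψ).Conn Set.univ g (g * h) := by
  induction hh using Subgroup.closure_induction generalizing g with
  | mem _ hx =>
    obtain ⟨x, rfl⟩ := hx
    exact Multigraph.Conn.edge (Γ := cayleyGraph ψ) (e := ⟨g, x⟩) (Set.mem_univ _)
  | one => exact (mul_one g).symm ▸ Multigraph.Conn.refl g
  | mul h h' _ _ ih ih' => exact (ih g).trans (mul_assoc g h h' ▸ ih' (g * h))
  | inv h _ ih => simpa only [inv_mul_cancel_right] using (ih (g * h⁻¹)).symm

theorem conn_cayleyGraph_iff (ψ : X → G) (u v : G) :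
    (cayleyGraph ψ).Conn Set.univ u v ↔
      (u : G ⧸ Subgroup.closure (Set.range ψ)) = (v : G ⧸ Subgroup.closure (Set.range ψ)) := by
  refine ⟨fun h => h.apply_eq fun e _ => ?_, fun h => ?_⟩
  · exact (QuotientGroup.mk_mul_of_mem e.base
      (Subgroup.subset_closure (Set.mem_range_self e.label))).symm
  · simpa only [mul_inv_cancel_left] using conn_cayleyGraph_mul ψ (QuotientGroup.eq.mp h) u

/-- The action of the free group on `G × ℚ` in which the inverse of a word `w` follows the path
spelled by `w` in the Cayley graph and adds up the cochain `c` along it. -/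
def cochainAction (ψ : X → G) (c : CayleyEdge G X → ℚ) : FreeGroup X →* Equiv.Perm (G × ℚ) :=
  FreeGroup.lift fun x =>
    { toFun := fun p => (p.1 * (ψ x)⁻¹, p.2 - c ⟨p.1 * (ψ x)⁻¹, x⟩)
      invFun := fun p => (p.1 * ψ x, p.2 + c ⟨p.1, x⟩)
      left_inv := fun p => by simp
      right_inv := fun p => by simp }

theorem cochainAction_mul_of_inv (ψ : X → G) (c : CayleyEdge G X → ℚ) (w : FreeGroup X) (x : X)
    (p : G × ℚ) : cochainAction ψ c (w * FreeGroup.of x)⁻¹ p =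
      ((cochainAction ψ c w⁻¹ p).1 * ψ x,
        (cochainAction ψ c w⁻¹ p).2 + c ⟨(cochainAction ψ c w⁻¹ p).1, x⟩) := by
  rw [mul_inv_rev, map_mul, Equiv.Perm.mul_apply, map_inv, cochainAction, FreeGroup.lift_apply_of]
  rfl

theorem cochainAction_apply_fst (ψ : X → G) (c : CayleyEdge G X → ℚ) (w : FreeGroup X)
    (p : G × ℚ) : (cochainAction ψ c w p).1 = p.1 * (FreeGroup.lift ψ w)⁻¹ := by
  induction w using FreeGroup.induction_on generalizing p with
  | C1 => simp
  | of x => simp [cochainAction]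
  | inv_of x _ => simp [cochainAction, Equiv.Perm.inv_def]
  | mul w w' ih ih' => rw [map_mul, Equiv.Perm.mul_apply, ih, ih', map_mul, mul_inv_rev, mul_assoc]

theorem acyclicOn_cayleyGraph {ψ : X → G} (hψ : Function.Injective (FreeGroup.lift ψ))
    (D : Set (CayleyEdge G X)) : (cayleyGraph ψ).AcyclicOn D := by
  intro c
  let r : G → G := fun g => (g : G ⧸ (FreeGroup.lift ψ).range).out
  have hword : ∀ g, ∃ w, r g * FreeGroup.lift ψ w = g := fun g => by
    obtain ⟨⟨_, w, rfl⟩, hw⟩ := QuotientGroup.mk_out_eq_mul (FreeGroup.lift ψ).range g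
    exact ⟨w⁻¹, by rw [map_inv]; exact mul_inv_eq_of_eq_mul hw⟩
  choose w hw using hword
  refine ⟨fun g => (cochainAction ψ c (w g)⁻¹ (r g, 0)).2, ?_⟩
  rintro ⟨g, x⟩ -
  have hr : r (g * ψ x) = r g := congrArg Quotient.out
    (QuotientGroup.mk_mul_of_mem g ⟨FreeGroup.of x, FreeGroup.lift_apply_of⟩)
  have hwg : w (g * ψ x) = w g * FreeGroup.of x := hψ <| mul_left_cancel (a := r g) <| by
    rw [map_mul, FreeGroup.lift_apply_of, ← mul_assoc, hw, ← hr, hw]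
  have hfst : (cochainAction ψ c (w g)⁻¹ (r g, 0)).1 = g := by
    rw [cochainAction_apply_fst, map_inv, inv_inv, hw]
  change (cochainAction ψ c (w (g * ψ x))⁻¹ (r (g * ψ x), 0)).2 =
    (cochainAction ψ c (w g)⁻¹ (r g, 0)).2 + c ⟨g, x⟩
  rw [hr, hwg, cochainAction_mul_of_inv, hfst]

/-- The order on the edges of a Cayley graph with labels well-ordered in which `e < f` if the
starting point of `f` is that of `e` times an element of `P`. -/
noncomputable abbrev CayleyEdge.partialOrder (P : Subsemigroup G) (hP : 1 ∉ P) :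
    PartialOrder (CayleyEdge G X) :=
  let r : CayleyEdge G X → CayleyEdge G X → Prop := fun e f =>
    e.base⁻¹ * f.base ∈ P ∨ e.base = f.base ∧ WellOrderingRel e.label f.label
  have : IsStrictOrder _ r :=
    { irrefl := by
        rintro e (h | h)
        · exact hP (inv_mul_cancel e.base ▸ h)
        · exact irrefl _ h.2
      trans := by
        rintro e f g (h | h) (h' | h')
        · exact Or.inl (by simpa only [mul_assoc, mul_inv_cancel_left] using mul_mem h h')
        · exact Or.inl (h'.1 ▸ h)
        · exact Or.inl (h.1 ▸ h')
        · exact Or.inr ⟨h.1.trans h'.1, _root_.trans h.2 h'.2⟩ }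
  partialOrderOfSO r

theorem CayleyEdge.covariantClass (P : Subsemigroup G) (hP : 1 ∉ P) :
    letI := CayleyEdge.partialOrder (X := X) P hP
    CovariantClass G (CayleyEdge G X) HSMul.hSMul LT.lt :=
  let _ := CayleyEdge.partialOrder (X := X) P hP
  ⟨fun g e f h => by
    refine Or.imp (fun h => ?_) (And.imp_left (congrArg (g * ·))) h
    rwa [smul_base, smul_base, mul_inv_rev, mul_assoc, inv_mul_cancel_left]⟩

theorem CayleyEdge.le_or_le {P : Subsemigroup G} (hP : 1 ∉ P) {e f : CayleyEdge G X}
    (h : e.base⁻¹ * f.base = 1 ∨ e.base⁻¹ * f.base ∈ P ∨ f.base⁻¹ * e.base ∈ P) :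
    letI := CayleyEdge.partialOrder (X := X) P hP
    e ≤ f ∨ f ≤ e := by
  let _ := CayleyEdge.partialOrder (X := X) P hP
  rcases h with h | h | h
  · have hbase := inv_mul_eq_one.mp h
    rcases trichotomous_of WellOrderingRel e.label f.label with hlt | heq | hgt
    · exact Or.inl (Or.inr (Or.inr ⟨hbase, hlt⟩))
    · exact Or.inl (CayleyEdge.ext hbase heq).le
    · exact Or.inr (Or.inr (Or.inr ⟨hbase.symm, hgt⟩))
  · exact Or.inl (Or.inr (Or.inl h))
  · exact Or.inr (Or.inr (Or.inl h))

theorem exists_isOrderedForest_cayleyGraph {ψ : X → G}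
    (hψ : Function.Injective (FreeGroup.lift ψ)) :
    ∃ _ : PartialOrder (CayleyEdge G X),
      CovariantClass G (CayleyEdge G X) HSMul.hSMul LT.lt ∧
      IsOrderedForest (cayleyGraph ψ)
        (QuotientGroup.mk : G → G ⧸ Subgroup.closure (Set.range ψ)) := by
  obtain ⟨P, hP, hP'⟩ := (isLocallyIndicable_of_isFreeGroup (FreeGroup X)).exists_positiveCone
  have hone : (1 : G) ∉ P.map (FreeGroup.lift ψ : FreeGroup X →ₙ* G) := by
    rintro ⟨w, hw, hone⟩
    rw [← map_one (FreeGroup.lift ψ)] at hone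
    exact hP (hψ hone ▸ hw)
  have htotal : ∀ g ∈ Subgroup.closure (Set.range ψ), g = 1 ∨
      g ∈ P.map (FreeGroup.lift ψ : FreeGroup X →ₙ* G) ∨
      g⁻¹ ∈ P.map (FreeGroup.lift ψ : FreeGroup X →ₙ* G) := fun g hg => by
    rw [← FreeGroup.range_lift_eq_closure] at hg
    obtain ⟨w, rfl⟩ := hg
    refine (eq_or_ne w 1).imp (fun h => by rw [h, map_one]) fun hw => ?_
    exact (hP' w hw).imp (Subsemigroup.mem_map_of_mem _)
      fun h => ⟨w⁻¹, h, map_inv (FreeGroup.lift ψ) w⟩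
  let _ := CayleyEdge.partialOrder (X := X) _ hone
  refine ⟨inferInstance, CayleyEdge.covariantClass _ hone, acyclicOn_cayleyGraph hψ _,
    conn_cayleyGraph_iff ψ, QuotientGroup.mk_surjective, fun e f h => CayleyEdge.le_or_le hone ?_⟩
  have h := htotal _ (QuotientGroup.eq.mp h)
  rwa [mul_inv_rev, inv_inv] at h

theorem lift_of_bijective (K : Type*) [Group K] [IsFreeGroup K] :
    Function.Bijective (FreeGroup.lift (IsFreeGroup.of : IsFreeGroup.Generators K → K)) := by
  have h : FreeGroup.lift IsFreeGroup.of = (IsFreeGroup.toFreeGroup K).symm.toMonoidHom :=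
    FreeGroup.ext_hom _ _ fun x => FreeGroup.lift_apply_of
  exact h ▸ (IsFreeGroup.toFreeGroup K).symm.bijective

theorem exists_isOrderedForest_of_isFreeGroup (F : Subgroup G) [IsFreeGroup F] :
    ∃ (ψ : IsFreeGroup.Generators F → G)
      (_ : PartialOrder (CayleyEdge G (IsFreeGroup.Generators F))),
      CovariantClass G (CayleyEdge G (IsFreeGroup.Generators F)) HSMul.hSMul LT.lt ∧
      IsOrderedForest (cayleyGraph ψ) (QuotientGroup.mk : G → G ⧸ F) := by
  let ψ : IsFreeGroup.Generators F → G := fun x => ((IsFreeGroup.of x : F) : G)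
  have hlift : FreeGroup.lift ψ = F.subtype.comp (FreeGroup.lift IsFreeGroup.of) :=
    FreeGroup.ext_hom _ _ fun x => by simp [ψ]
  have hψ : Function.Injective (FreeGroup.lift ψ) := by
    rw [hlift]
    exact F.subtype_injective.comp (lift_of_bijective F).1
  have hclosure : Subgroup.closure (Set.range ψ) = F := by
    rw [← FreeGroup.range_lift_eq_closure, hlift, MonoidHom.range_comp,
      MonoidHom.range_eq_top.mpr (lift_of_bijective F).2, ← MonoidHom.range_eq_map, F.range_subtype]
  have h := exists_isOrderedForest_cayleyGraph hψ
  rw [hclosure] at h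
  exact ⟨ψ, h⟩

end Cayley

/-! ### Ranks of free groups -/

section Rank

/-- Evaluation of rational characters at a family of group elements. -/
def evalCharacters {A ι : Type*} [Group A] (g : ι → A) : (Additive A →+ ℚ) →ₗ[ℚ] (ι → ℚ) where
  toFun f i := f (Additive.ofMul (g i))
  map_add' _ _ := rfl
  map_smul' _ _ := rfl

theorem evalCharacters_injective {A ι : Type*} [Group A] {g : ι → A}
    (hg : Subgroup.closure (Set.range g) = ⊤) : Function.Injective (evalCharacters g) := by
  intro f f' h
  refine AddMonoidHom.toMultiplicativeRight.injective (MonoidHom.eq_of_eqOn_dense hg ?_)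
  rintro _ ⟨i, rfl⟩
  exact congrArg Multiplicative.ofAdd (congrFun h i)

theorem closure_range_of (K : Type*) [Group K] [IsFreeGroup K] :
    Subgroup.closure (Set.range (IsFreeGroup.of : IsFreeGroup.Generators K → K)) = ⊤ :=
  FreeGroup.lift_surjective_iff_closure_range_eq_top.mp (lift_of_bijective K).2

theorem evalCharacters_of_bijective (K : Type*) [Group K] [IsFreeGroup K] :
    Function.Bijective (evalCharacters (IsFreeGroup.of : IsFreeGroup.Generators K → K)) := by
  refine ⟨evalCharacters_injective (closure_range_of K), fun c =>
    ⟨AddMonoidHom.toMultiplicativeRight.symm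
      (IsFreeGroup.lift fun i => Multiplicative.ofAdd (c i)), funext fun i => ?_⟩⟩
  simp [evalCharacters]

instance (K : Type*) [Group K] [IsFreeGroup K] [Group.FG K] :
    Finite (IsFreeGroup.Generators K) := by
  obtain ⟨s, hs⟩ := Group.fg_def.mp ‹Group.FG K›
  have : FiniteDimensional ℚ (Additive K →+ ℚ) :=
    FiniteDimensional.of_injective (evalCharacters ((↑) : s → K))
      (evalCharacters_injective (by simpa using hs))
  have : FiniteDimensional ℚ (IsFreeGroup.Generators K → ℚ) :=
    FiniteDimensional.of_surjective _ (evalCharacters_of_bijective K).2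
  classical
  exact (Pi.linearIndependent_single_one (IsFreeGroup.Generators K) ℚ).finite

theorem betti_eq_card_generators (K : Type*) [Group K] [IsFreeGroup K] [Group.FG K] :
    betti K = Nat.card (IsFreeGroup.Generators K) := by
  have := Fintype.ofFinite (IsFreeGroup.Generators K)
  rw [betti, (LinearEquiv.ofBijective _ (evalCharacters_of_bijective K)).finrank_eq,
    Module.finrank_fintype_fun_eq_card, Nat.card_eq_fintype_card]

theorem betti_le_card {A : Type*} [Group A] {s : Finset A}
    (hs : Subgroup.closure (s : Set A) = ⊤) : betti A ≤ s.card := by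
  have := LinearMap.finrank_le_finrank_of_injective (f := evalCharacters ((↑) : s → A))
    (evalCharacters_injective (by simpa using hs))
  simpa [betti] using this

theorem grank_eq_betti (K : Type*) [Group K] [IsFreeGroup K] [Group.FG K] :
    grank K = betti K := by
  classical
  have := Fintype.ofFinite (IsFreeGroup.Generators K)
  refine le_antisymm ?_ (le_sInf ?_)
  · have hcard : (Finset.univ.image (IsFreeGroup.of : IsFreeGroup.Generators K → K)).card ≤
        betti K := by
      rw [betti_eq_card_generators, Nat.card_eq_fintype_card]
      exact Finset.card_image_le
    refine le_trans (sInf_le ⟨Finset.univ.image IsFreeGroup.of, ?_, rfl⟩) (Nat.cast_le.mpr hcard)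
    simpa using closure_range_of K
  · rintro _ ⟨s, hs, rfl⟩
    exact Nat.cast_le.mpr (betti_le_card hs)

end Rank

section Schreier

theorem orbitCount_univ_group (A : Type*) [Group A] : orbitCount A (Set.univ : Set A) = 1 := by
  rw [orbitCount_eq_encard (γ := id) (isSMulInvariant_univ A) fun _ _ _ => rfl]
  simp

variable (K : Type*) [Group K] [IsFreeGroup K]

theorem isSubtree_cayleyGraph_of :
    (cayleyGraph (IsFreeGroup.of : IsFreeGroup.Generators K → K)).IsSubtree Set.univ Set.univ where
  source_mem _ _ := trivial
  target_mem _ _ := trivial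
  nonempty := Set.univ_nonempty
  conn u _ v _ := (conn_cayleyGraph_iff IsFreeGroup.of u v).mpr
    (QuotientGroup.eq.mpr (closure_range_of K ▸ Subgroup.mem_top _))
  acyclicOn := acyclicOn_cayleyGraph (lift_of_bijective K).1 _

theorem orbitCount_cayleyEdge_ne_top [Group.FG K] :
    orbitCount K (Set.univ : Set (CayleyEdge K (IsFreeGroup.Generators K))) ≠ ⊤ := by
  rw [orbitCount_eq_encard (γ := CayleyEdge.base) (isSMulInvariant_univ K) fun _ _ _ => rfl,
    Set.encard_ne_top_iff]
  refine (Set.finite_range (CayleyEdge.mk (1 : K))).subset ?_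
  rintro ⟨_, x⟩ ⟨-, rfl⟩
  exact Set.mem_range_self x

variable {K}

theorem index_mul_betti_add_one [Group.FG K] (N : Subgroup K) [N.FiniteIndex] :
    N.index * betti K + 1 = N.index + betti N := by
  have hindex : (N.index : ℕ∞) ≠ ⊤ := ENat.natCast_ne_top _
  have : IsCancelSMul K (CayleyEdge K (IsFreeGroup.Generators K)) :=
    Multigraph.Equivariant.isCancelSMul_edges (cayleyGraph IsFreeGroup.of)
  have hvertices := orbitCount_subgroup (X := K) N (isSMulInvariant_univ K)
  have hedges := orbitCount_subgroup (X := CayleyEdge K (IsFreeGroup.Generators K)) N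
    (isSMulInvariant_univ K)
  have hK := orbitCount_edges_add_one (isSMulInvariant_univ K) (isSMulInvariant_univ K)
    (isSubtree_cayleyGraph_of K) (orbitCount_univ_group K ▸ ENat.one_ne_top)
    (orbitCount_cayleyEdge_ne_top K)
  rw [orbitCount_univ_group, add_comm] at hK
  rw [orbitCount_univ_group, mul_one] at hvertices
  rw [WithTop.add_left_cancel ENat.one_ne_top hK] at hedges
  have hN := orbitCount_edges_add_one (isSMulInvariant_univ N) (isSMulInvariant_univ N)
    (isSubtree_cayleyGraph_of K) (hvertices ▸ hindex)
    (hedges ▸ (by exact_mod_cast ENat.natCast_ne_top (N.index * betti K)))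
  rw [hvertices, hedges] at hN
  exact_mod_cast hN

theorem betti_sub_one [Group.FG K] (N : Subgroup K) [N.FiniteIndex] :
    betti N - 1 = N.index * (betti K - 1) := by
  have hrank := index_mul_betti_add_one N
  rw [Nat.mul_sub, mul_one]
  omega

end Schreier

/-! ### The virtual reduced rank as an orbit count -/

section VirtualRank

instance {A E : Type*} [Group A] [MulAction A E] [LT E] [CovariantClass A E HSMul.hSMul LT.lt]
    (N : Subgroup A) : CovariantClass N E HSMul.hSMul LT.lt :=
  ⟨fun a _ _ h => CovariantClass.elim (μ := HSMul.hSMul) (r := LT.lt) (a : A) h⟩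

theorem IsOrderedForest.orbitCount_essentialEdges_of_isFreeGroup {K V E ι : Type*} [Group K]
    [IsFreeGroup K] [Group.FG K] [MulAction K V] [IsCancelSMul K V] [MulAction K E]
    [PartialOrder E] [CovariantClass K E HSMul.hSMul LT.lt] {Γ : Multigraph V E}
    [Γ.Equivariant K] [MulAction K ι] [Finite ι] {κ : V → ι} (hΓ : IsOrderedForest Γ κ)
    (hκ : ∀ (a : K) v, κ (a • v) = a • κ v) :
    orbitCount K (essentialEdges K Γ) = Nat.card ι * (betti K - 1 : ℕ) := by
  let N : Subgroup K := (MulAction.toPermHom K ι).ker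
  have : IsCancelSMul K E := Multigraph.Equivariant.isCancelSMul_edges Γ
  have hN := hΓ.orbitCount_essentialEdges (A := N) fun a v => by
    rw [Subgroup.smul_def, hκ]
    exact Equiv.ext_iff.mp a.2 (κ v)
  rw [essentialEdges_subgroup, orbitCount_subgroup N isSMulInvariant_essentialEdges,
    betti_sub_one, Nat.cast_mul, mul_left_comm] at hN
  exact (ENat.mul_right_strictMono (mod_cast Subgroup.FiniteIndex.index_ne_zero)
    (ENat.natCast_ne_top _)).injective hN

theorem IsOrderedForest.toENNReal_orbitCount_essentialEdges {A V E ι : Type*} [Group A]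
    [MulAction A V] [IsCancelSMul A V] [MulAction A E]
    [PartialOrder E] [CovariantClass A E HSMul.hSMul LT.lt] {Γ : Multigraph V E}
    [Γ.Equivariant A] [MulAction A ι] [Finite ι] {κ : V → ι} (hΓ : IsOrderedForest Γ κ)
    (hκ : ∀ (a : A) v, κ (a • v) = a • κ v) {r : ℝ≥0∞} (hr : IsVirtRedRank A r) :
    ((orbitCount A (essentialEdges A Γ) : ℕ∞) : ℝ≥0∞) = Nat.card ι * r := by
  obtain ⟨K, hK, _, _, rfl⟩ := hr
  have : IsCancelSMul A E := Multigraph.Equivariant.isCancelSMul_edges Γ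
  have hcount := hΓ.orbitCount_essentialEdges_of_isFreeGroup (K := K) fun a v => hκ a v
  rw [essentialEdges_subgroup, orbitCount_subgroup K isSMulInvariant_essentialEdges] at hcount
  replace hcount := congrArg ENat.toENNReal hcount
  simp only [ENat.toENNReal_mul, ENat.toENNReal_coe] at hcount
  rw [grank_eq_betti, ← Nat.cast_one, ← ENNReal.natCast_sub, ← mul_div_assoc, ← hcount, mul_comm,
    ENNReal.mul_div_cancel_right (by exact_mod_cast hK.index_ne_zero) (ENNReal.natCast_ne_top _)]

theorem tsum_orbitCount_essentialEdges_le {G V E : Type*} [Group G] [MulAction G V]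
    [IsCancelSMul G V] [MulAction G E] [PartialOrder E] [CovariantClass G E HSMul.hSMul LT.lt]
    (Γ : Multigraph V E) [Γ.Equivariant G] {A B : Subgroup G} {S : Set G}
    (hS : Set.InjOn (DoubleCoset.mk A B) S) :
    ∑' s : S, ((orbitCount ↥(A ⊓ B.map (MulAut.conj (s : G)).toMonoidHom)
        (essentialEdges ↥(A ⊓ B.map (MulAut.conj (s : G)).toMonoidHom) Γ) : ℕ∞) : ℝ≥0∞) ≤
      (orbitCount A (essentialEdges A Γ) : ℕ∞) * (orbitCount B (essentialEdges B Γ) : ℕ∞) := by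
  have : IsCancelSMul G E := Multigraph.Equivariant.isCancelSMul_edges Γ
  refine tsum_orbitCount_doubleCoset_le hS
    (Z := fun s => essentialEdges ↥(A ⊓ B.map (MulAut.conj s).toMonoidHom) Γ)
    (fun s => isSMulInvariant_essentialEdges) (fun s e he => ?_) fun s e he => ?_
  · rw [← one_smul G e]
    exact smul_mem_essentialEdges (B := ↥(A ⊓ B.map (MulAut.conj s).toMonoidHom)) (C := A)
      (fun b f => ⟨⟨b, b.2.1⟩, by simp only [one_smul, Subgroup.smul_def]⟩) he
  · refine smul_mem_essentialEdges (B := ↥(A ⊓ B.map (MulAut.conj s).toMonoidHom)) (C := B)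
      (fun b f => ?_) he
    obtain ⟨c, hc, hcb : s * c * s⁻¹ = b⟩ := b.2.2
    refine ⟨⟨c, hc⟩, ?_⟩
    rw [Subgroup.smul_def, Subgroup.smul_def, ← hcb, smul_smul, smul_smul, mul_assoc s,
      inv_mul_cancel_left]

end VirtualRank

end HannaNeumann

theorem virtually_free_strengthened_hanna_neumann_general
    {G : Type*} [Group G] (F : Subgroup G) [IsFreeGroup F] [F.FiniteIndex]
    (A B : Subgroup G) (S : Set G)
    (hS : Set.InjOn (DoubleCoset.mk A B) S)
    (rA rB : ℝ≥0∞) (hrA : IsVirtRedRank A rA) (hrB : IsVirtRedRank B rB)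
    (f : G → ℝ≥0∞)
    (hf : ∀ s ∈ S,
      IsVirtRedRank (↥(A ⊓ Subgroup.map (MulAut.conj s).toMonoidHom B)) (f s)) :
    ∑' s : S, f (s : G) ≤ (F.index : ℝ≥0∞) * rA * rB := by
  have : Finite (G ⧸ F) := Subgroup.finite_quotient_of_finiteIndex
  obtain ⟨ψ, _, _, hΓ⟩ := HannaNeumann.exists_isOrderedForest_of_isFreeGroup F
  let Γ := HannaNeumann.cayleyGraph ψ
  have hcount : ∀ (H : Subgroup G) (r : ℝ≥0∞), IsVirtRedRank H r →
      (HannaNeumann.orbitCount H (HannaNeumann.essentialEdges H Γ) : ℝ≥0∞) = F.index * r :=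
    fun H r hr => hΓ.toENNReal_orbitCount_essentialEdges (A := H) (fun _ _ => rfl) hr
  have hle := HannaNeumann.tsum_orbitCount_essentialEdges_le Γ hS
  rw [hcount A rA hrA, hcount B rB hrB, tsum_congr fun s : S => hcount _ _ (hf s s.2),
    ENNReal.tsum_mul_left, mul_assoc (F.index : ℝ≥0∞)] at hle
  have hindex : (F.index : ℝ≥0∞) ≠ 0 := mod_cast Subgroup.FiniteIndex.index_ne_zero
  calc ∑' s : S, f s ≤ rA * (F.index * rB) :=
        (ENNReal.mul_le_mul_iff_right hindex (ENNReal.natCast_ne_top _)).mp hle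
    _ = F.index * rA * rB := by ring

/-- Theorem on intersection of subgroups in virtually free groups: if `G` contains a free
subgroup `F` of finite index, `A, B ≤ G`, and `S` is a system of representatives of the
double cosets `AsB` in `G`, then `∑_{s ∈ S} r̄k(A ∩ sBs⁻¹) ≤ [G:F] ⬝ r̄k(A) ⬝ r̄k(B)`. -/
theorem virtually_free_strengthened_hanna_neumann
    {G : Type*} [Group G] (F : Subgroup G) [IsFreeGroup F] [F.FiniteIndex]
    (A B : Subgroup G) (S : Set G)
    (hS : ∀ g : G, ∃! s, s ∈ S ∧ ∃ a ∈ A, ∃ b ∈ B, g = a * s * b)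
    (rA rB : ℝ≥0∞) (hrA : IsVirtRedRank A rA) (hrB : IsVirtRedRank B rB)
    (f : G → ℝ≥0∞)
    (hf : ∀ s ∈ S,
      IsVirtRedRank (↥(A ⊓ Subgroup.map (MulAut.conj s).toMonoidHom B)) (f s)) :
    ∑' s : S, f (s : G) ≤ (F.index : ℝ≥0∞) * rA * rB :=
  virtually_free_strengthened_hanna_neumann_general F A B S
    (HannaNeumann.injOn_doubleCosetMk_of_existsUnique hS) rA rB hrA hrB f hf
end

section
/- (Orbit-intersection lemma.) Let a group G act freely on a set X, let A and B be subgroups of G, and let D be a system of representatives of the double cosets AdB in G (i.e., the map d ↦ AdB is a bijection from D onto the set of (A,B)-double cosets of G). Then ∑_{d∈D} |X/(d⁻¹Ad ∩ B)| ≤ |X/A| · |X/B| as cardinals, where X/H denotes the set of orbits of the action of a subgroup H ⩽ G on X. -/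
/-!
The orbits of `d • x` under `A` and of `x` under `B` depend only on the orbit of `x` under
`d⁻¹Ad ∩ B`. Suppose that `(d, x)` and `(e, y)` give the same pair, so that `x = b • y` and
`a • e • y = d • x` with `a ∈ A` and `b ∈ B`. Then `g = d⁻¹ae` takes `y` to `x`, as `b` does, so `g`
lies in `B` as soon as the stabiliser of `y` does. Thus `e = a⁻¹dg` lies in `AdB`, and if `e = d`,
then `g` is an element of `d⁻¹Ad ∩ B` taking `y` to `x`.
-/

open MulAction

section

variable {G X : Type*} [Group G] [MulAction G X]

theorem mem_of_smul_mem_orbit_of_stabilizer_le {B : Subgroup G} {g : G} {x : X}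
    (hx : stabilizer G x ≤ B) (hg : g • x ∈ orbit B x) : g ∈ B := by
  obtain ⟨b, hb : (b : G) • x = g • x⟩ := hg
  have hbg : (b : G)⁻¹ * g ∈ B := hx <| by
    rw [mem_stabilizer_iff, mul_smul, ← hb, inv_smul_smul]
  exact (B.mul_mem_cancel_left (B.inv_mem b.2)).mp hbg

/-- The map `X/(d⁻¹Ad ∩ B) → X/A × X/B` sending the orbit of `x` to the pair formed by the orbits
of `d • x` and of `x`; it compares the two sides of the orbit-intersection inequality. -/
def orbitPair (A B : Subgroup G) (d : G) :
    orbitRel.Quotient ↥(A.map (MulAut.conj d⁻¹).toMonoidHom ⊓ B) X →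
      orbitRel.Quotient A X × orbitRel.Quotient B X :=
  Quotient.lift (fun x ↦ (⟦d • x⟧, ⟦x⟧)) <| by
    rintro _ y ⟨⟨_, ⟨a, ha, rfl⟩, hB⟩, rfl⟩
    refine Prod.ext (Quotient.sound ⟨⟨a, ha⟩, ?_⟩) (Quotient.sound ⟨⟨_, hB⟩, rfl⟩)
    change a • d • y = d • MulAut.conj d⁻¹ a • y
    simp [smul_smul, mul_assoc]

variable {A B : Subgroup G} {d e : G}

theorem exists_smul_eq_of_orbitPair_eq {x y : X} (hy : stabilizer G y ≤ B)
    (h : orbitPair A B d ⟦x⟧ = orbitPair A B e ⟦y⟧) :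
    ∃ a ∈ A, d⁻¹ * a * e ∈ B ∧ (d⁻¹ * a * e) • y = x := by
  obtain ⟨⟨a, ha⟩, hax : a • e • y = d • x⟩ := Quotient.exact (congrArg Prod.fst h)
  have hxy : x ∈ orbit B y := Quotient.exact (congrArg Prod.snd h)
  have hgy : (d⁻¹ * a * e) • y = x := by rw [mul_smul, mul_smul, hax, inv_smul_smul]
  exact ⟨a, ha, mem_of_smul_mem_orbit_of_stabilizer_le hy (hgy ▸ hxy), hgy⟩

theorem doubleCoset_eq_of_orbitPair_eq (hB : ∀ x : X, stabilizer G x ≤ B)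
    {p : orbitRel.Quotient ↥(A.map (MulAut.conj d⁻¹).toMonoidHom ⊓ B) X}
    {q : orbitRel.Quotient ↥(A.map (MulAut.conj e⁻¹).toMonoidHom ⊓ B) X}
    (h : orbitPair A B d p = orbitPair A B e q) :
    DoubleCoset.doubleCoset d A B = DoubleCoset.doubleCoset e A B := by
  induction p using Quotient.inductionOn with | _ x
  induction q using Quotient.inductionOn with | _ y
  obtain ⟨a, ha, hg, -⟩ := exists_smul_eq_of_orbitPair_eq (hB y) h
  refine (DoubleCoset.doubleCoset_eq_of_mem (DoubleCoset.mem_doubleCoset.mpr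
    ⟨a⁻¹, A.inv_mem ha, d⁻¹ * a * e, hg, ?_⟩)).symm
  group

theorem orbitPair_injective (hB : ∀ x : X, stabilizer G x ≤ B) :
    Function.Injective (orbitPair (X := X) A B d) := by
  intro p q h
  induction p using Quotient.inductionOn with | _ x
  induction q using Quotient.inductionOn with | _ y
  obtain ⟨a, ha, hg, hgy⟩ := exists_smul_eq_of_orbitPair_eq (hB y) h
  have hgA : d⁻¹ * a * d ∈ A.map (MulAut.conj d⁻¹).toMonoidHom := ⟨a, ha, by simp⟩
  exact Quotient.sound ⟨⟨_, hgA, hg⟩, hgy⟩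

end

theorem doubleCoset_injOn_of_existsUnique {G : Type*} [Group G] {A B : Subgroup G} {D : Set G}
    (hD : ∀ g ∈ D, ∃! d, d ∈ D ∧ ∃ a ∈ A, ∃ b ∈ B, g = a * d * b) :
    D.InjOn fun d ↦ DoubleCoset.doubleCoset d A B := by
  intro d hd e he (hde : DoubleCoset.doubleCoset d A B = DoubleCoset.doubleCoset e A B)
  have hdd := DoubleCoset.mem_doubleCoset_self A B d
  have hed : d ∈ DoubleCoset.doubleCoset e A B := hde ▸ hdd
  exact (hD d hd).unique ⟨hd, DoubleCoset.mem_doubleCoset.mp hdd⟩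
    ⟨he, DoubleCoset.mem_doubleCoset.mp hed⟩

theorem orbit_intersection_general {G : Type u} {X : Type v} [Group G] [MulAction G X]
    {A B : Subgroup G} {D : Set G} (hB : ∀ x : X, stabilizer G x ≤ B)
    (hD : D.InjOn fun d ↦ DoubleCoset.doubleCoset d A B) :
    (Cardinal.sum fun d : D ↦ Cardinal.mk
        (orbitRel.Quotient ↥(A.map (MulAut.conj (d : G)⁻¹).toMonoidHom ⊓ B) X)) ≤
      Cardinal.lift.{u}
        (Cardinal.mk (orbitRel.Quotient A X) * Cardinal.mk (orbitRel.Quotient B X)) := by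
  rw [← Cardinal.mk_sigma, Cardinal.mul_def, ← Cardinal.mk_uLift]
  refine Cardinal.mk_le_of_injective (f := fun p ↦ ULift.up (orbitPair A B (p.1 : G) p.2)) ?_
  rintro ⟨⟨d, hd⟩, p⟩ ⟨⟨e, he⟩, q⟩ hpq
  have hpq' : orbitPair A B d p = orbitPair A B e q := ULift.up_injective hpq
  obtain rfl : d = e := hD hd he (doubleCoset_eq_of_orbitPair_eq hB hpq')
  rw [orbitPair_injective hB hpq']

/-- The orbit-intersection lemma: if a group `G` acts freely on a set `X`, `A, B ≤ G`, and
`D` is a system of representatives of the double cosets `AdB` in `G`, then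
`∑_{d ∈ D} |X/(d⁻¹Ad ∩ B)| ≤ |X/A| ⬝ |X/B|` as cardinals, where `X/H` is the set of
`H`-orbits in `X`. -/
theorem orbit_intersection {G X : Type u} [Group G] [MulAction G X]
    (hfree : ∀ (g : G) (x : X), g • x = x → g = 1)
    (A B : Subgroup G) (D : Set G)
    (hD : ∀ g : G, ∃! d, d ∈ D ∧ ∃ a ∈ A, ∃ b ∈ B, g = a * d * b) :
    (Cardinal.sum fun d : D =>
        Cardinal.mk (MulAction.orbitRel.Quotient
          ↥(Subgroup.map (MulAut.conj (d : G)⁻¹).toMonoidHom A ⊓ B) X)) ≤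
      Cardinal.mk (MulAction.orbitRel.Quotient A X) *
        Cardinal.mk (MulAction.orbitRel.Quotient B X) := by
  have hstab (x : X) : stabilizer G x ≤ B := fun g hg ↦ hfree g x hg ▸ B.one_mem
  simpa using orbit_intersection_general hstab (doubleCoset_injOn_of_existsUnique fun g _ ↦ hD g)
end

section
/- (Orbit-intersection lemma, relative version.) Let a group G act freely on a set X, let A and B be subgroups of G, and let D be a system of representatives of the double cosets AdB in G. Let Y ⊆ X be an A-invariant subset and Z ⊆ X be a B-invariant subset. Then ∑_{d∈D} |((d⁻¹·Y) ∩ Z)/(d⁻¹Ad ∩ B)| ≤ |Y/A| · |Z/B| as cardinals, where d⁻¹·Y = {d⁻¹·y : y ∈ Y} and W/H denotes the set of orbits of a subgroup H ⩽ G acting on an H-invariant set W. -/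
open scoped Pointwise

/-- The set of orbits of the action of a subgroup `H ≤ G` on an `H`-invariant subset
`W ⊆ X`: the quotient of `W` by the restriction of the `H`-orbit equivalence relation. -/
def orbitsIn {G X : Type u} [Group G] [MulAction G X] (H : Subgroup G) (W : Set X) :
    Type u :=
  Quotient (Setoid.comap (Subtype.val : W → X) (MulAction.orbitRel H X))

/-!
Send the orbit of `x` in the summand of `d` to the pair of orbits of `d • x` in `Y` and of `x` in
`Z`. If `x` and `x'`, in the summands of `d` and `d'`, have the same image, then
`a • d' • x' = d • x` and `b • x' = x` for some `a ∈ A` and `b ∈ B`. Put `c = d⁻¹ * a * d'`. Then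
`c • x' = x`, so `b⁻¹ * c` fixes `x'`. The stabilizer of `x'` lies in `B`, as it does for any free
action, and therefore `c ∈ B`. Now `a * d' = d * c` puts `d` and `d'` in the same double coset,
hence `d = d'`, and `c` is an element of `d⁻¹Ad ∩ B` carrying `x'` to `x`.
-/

namespace orbitsIn

variable {G X : Type u} [Group G] [MulAction G X] {H : Subgroup G} {W : Set X}

/-- The `H`-orbit of a point of `W`, as an element of `W/H`. -/
def mk (H : Subgroup G) (x : W) : orbitsIn H W :=
  Quotient.mk _ x

theorem mk_surjective : Function.Surjective (mk H : W → orbitsIn H W) :=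
  Quotient.mk_surjective

theorem mk_eq_mk_iff {x y : W} : mk H x = mk H y ↔ ∃ h ∈ H, h • (y : X) = x := by
  refine Quotient.eq.trans ?_
  simp only [Setoid.comap_rel, MulAction.orbitRel_apply, MulAction.mem_orbit_iff, Subtype.exists,
    Subgroup.mk_smul, exists_prop]

variable {G' X' : Type v} [Group G'] [MulAction G' X'] {K : Subgroup G'} {V : Set X'}

/-- The map `W/H → V/K` induced by a map `f` that sends `W` into `V` and points of `W` in the same
`H`-orbit to points in the same `K`-orbit. -/
def map (f : X → X') (hf : Set.MapsTo f W V)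
    (hHK : ∀ h ∈ H, ∀ x ∈ W, ∃ k ∈ K, k • f x = f (h • x)) :
    orbitsIn H W → orbitsIn K V :=
  Quotient.lift (fun x => mk K (hf.restrict f W V x)) fun x y hxy => by
    obtain ⟨h, hh, hyx⟩ := mk_eq_mk_iff.1 (Quotient.sound hxy)
    obtain ⟨k, hk, hfyx⟩ := hHK h hh y y.2
    exact mk_eq_mk_iff.2 ⟨k, hk, hfyx.trans (congrArg f hyx)⟩

end orbitsIn

theorem mem_map_conj_inv_iff {G : Type*} [Group G] {A : Subgroup G} {d g : G} :
    g ∈ A.map (MulAut.conj d⁻¹).toMonoidHom ↔ d * g * d⁻¹ ∈ A := by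
  rw [Subgroup.mem_map_equiv, MulAut.conj_symm_apply, inv_inv]

theorem mem_of_smul_eq_smul_of_stabilizer_le {G X : Type*} [Group G] [MulAction G X]
    {B : Subgroup G} {x : X} (hx : MulAction.stabilizer G x ≤ B) {b g : G} (hb : b ∈ B)
    (h : g • x = b • x) : g ∈ B := by
  have hfix : b⁻¹ * g ∈ MulAction.stabilizer G x := by
    rw [MulAction.mem_stabilizer_iff, mul_smul, h, inv_smul_smul]
  exact (B.mul_mem_cancel_left (B.inv_mem hb)).1 (hx hfix)

section OrbitIntersection

variable {G X : Type u} [Group G] [MulAction G X] {A B : Subgroup G} {Y Z : Set X}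

/-- The orbit set `((d⁻¹·Y) ∩ Z)/(d⁻¹Ad ∩ B)`, the summand indexed by `d`. -/
abbrev OrbitIntersection (A B : Subgroup G) (Y Z : Set X) (d : G) : Type u :=
  orbitsIn (A.map (MulAut.conj d⁻¹).toMonoidHom ⊓ B) ((d⁻¹ • Y) ∩ Z)

namespace OrbitIntersection

/-- The map `((d⁻¹·Y) ∩ Z)/(d⁻¹Ad ∩ B) → Y/A` sending the orbit of `x` to the orbit of `d • x`. -/
def toLeft (d : G) : OrbitIntersection A B Y Z d → orbitsIn A Y :=
  orbitsIn.map (d • ·) (fun _ hx => Set.mem_inv_smul_set_iff.1 hx.1) fun h hh _ _ =>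
    ⟨d * h * d⁻¹, mem_map_conj_inv_iff.1 hh.1, by simp only [mul_smul, inv_smul_smul]⟩

/-- The map `((d⁻¹·Y) ∩ Z)/(d⁻¹Ad ∩ B) → Z/B` sending the orbit of `x` to the orbit of `x`. -/
def toRight (d : G) : OrbitIntersection A B Y Z d → orbitsIn B Z :=
  orbitsIn.map id (fun _ hx => hx.2) fun h hh _ _ => ⟨h, hh.2, rfl⟩

/-- The pairing of `toLeft` and `toRight`, a map
`((d⁻¹·Y) ∩ Z)/(d⁻¹Ad ∩ B) → (Y/A) × (Z/B)`. -/
def toProd (d : G) (p : OrbitIntersection A B Y Z d) : orbitsIn A Y × orbitsIn B Z :=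
  (toLeft d p, toRight d p)

theorem toProd_mk_eq_iff {d d' : G} {x : ↥((d⁻¹ • Y) ∩ Z)} {x' : ↥((d'⁻¹ • Y) ∩ Z)} :
    toProd d (orbitsIn.mk (A.map (MulAut.conj d⁻¹).toMonoidHom ⊓ B) x) =
        toProd d' (orbitsIn.mk (A.map (MulAut.conj d'⁻¹).toMonoidHom ⊓ B) x') ↔
      (∃ a ∈ A, a • d' • (x' : X) = d • (x : X)) ∧ ∃ b ∈ B, b • (x' : X) = x :=
  Prod.ext_iff.trans (and_congr orbitsIn.mk_eq_mk_iff orbitsIn.mk_eq_mk_iff)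

theorem sigma_toProd_injective {D : Set G} (hstab : ∀ z ∈ Z, MulAction.stabilizer G z ≤ B)
    (hD : D.InjOn (DoubleCoset.mk A B)) :
    Function.Injective fun p : Σ d : D, OrbitIntersection A B Y Z (d : G) =>
      toProd (p.1 : G) p.2 := by
  rintro ⟨⟨d, hd⟩, p⟩ ⟨⟨d', hd'⟩, p'⟩ hpp'
  obtain ⟨x, rfl⟩ := orbitsIn.mk_surjective p
  obtain ⟨x', rfl⟩ := orbitsIn.mk_surjective p'
  obtain ⟨⟨a, ha, hax⟩, b, hb, hbx⟩ := toProd_mk_eq_iff.1 hpp'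
  obtain ⟨c, hc⟩ : ∃ c, a * d' = d * c := ⟨d⁻¹ * (a * d'), (mul_inv_cancel_left _ _).symm⟩
  have hcx : c • (x' : X) = x := by
    rwa [← mul_smul, hc, mul_smul, smul_left_cancel_iff] at hax
  have hcB : c ∈ B :=
    mem_of_smul_eq_smul_of_stabilizer_le (hstab x' x'.2.2) hb (hcx.trans hbx.symm)
  obtain rfl : d' = d := hD hd' hd <| (DoubleCoset.eq A B d' d).2
    ⟨a, ha, c⁻¹, B.inv_mem hcB, eq_mul_inv_of_mul_eq hc.symm⟩
  have hcA : d' * c * d'⁻¹ ∈ A := by rwa [← hc, mul_inv_cancel_right]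
  exact congrArg (Sigma.mk _)
    (orbitsIn.mk_eq_mk_iff.2 ⟨c, ⟨mem_map_conj_inv_iff.2 hcA, hcB⟩, hcx⟩)

end OrbitIntersection

theorem orbit_intersection_relative_general {D : Set G}
    (hstab : ∀ z ∈ Z, MulAction.stabilizer G z ≤ B) (hD : D.InjOn (DoubleCoset.mk A B)) :
    (Cardinal.sum fun d : D => Cardinal.mk (OrbitIntersection A B Y Z (d : G))) ≤
      Cardinal.mk (orbitsIn A Y) * Cardinal.mk (orbitsIn B Z) := by
  rw [← Cardinal.mk_sigma, Cardinal.mul_def]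
  exact Cardinal.mk_le_of_injective (OrbitIntersection.sigma_toProd_injective hstab hD)

end OrbitIntersection

theorem injOn_doubleCosetMk_of_existsUnique {G : Type*} [Group G] {A B : Subgroup G} {D : Set G}
    (hD : ∀ g : G, ∃! d, d ∈ D ∧ ∃ a ∈ A, ∃ b ∈ B, g = a * d * b) :
    D.InjOn (DoubleCoset.mk A B) := fun d hd d' hd' h =>
  (hD d').unique ⟨hd, (DoubleCoset.eq A B d d').1 h⟩
    ⟨hd', (DoubleCoset.eq A B d' d').1 rfl⟩

/-- The orbit-intersection lemma, relative version: if a group `G` acts freely on a set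
`X`, `A, B ≤ G`, `D` is a system of representatives of the double cosets `AdB` in `G`,
`Y ⊆ X` is `A`-invariant and `Z ⊆ X` is `B`-invariant, then
`∑_{d ∈ D} |((d⁻¹·Y) ∩ Z)/(d⁻¹Ad ∩ B)| ≤ |Y/A| ⬝ |Z/B|` as cardinals. -/
theorem orbit_intersection_relative {G X : Type u} [Group G] [MulAction G X]
    (hfree : ∀ (g : G) (x : X), g • x = x → g = 1)
    (A B : Subgroup G) (D : Set G)
    (hD : ∀ g : G, ∃! d, d ∈ D ∧ ∃ a ∈ A, ∃ b ∈ B, g = a * d * b)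
    (Y Z : Set X)
    (hY : ∀ a ∈ A, ∀ y ∈ Y, a • y ∈ Y) (hZ : ∀ b ∈ B, ∀ z ∈ Z, b • z ∈ Z) :
    (Cardinal.sum fun d : D =>
        Cardinal.mk (orbitsIn (Subgroup.map (MulAut.conj (d : G)⁻¹).toMonoidHom A ⊓ B)
          (((d : G)⁻¹ • Y) ∩ Z))) ≤
      Cardinal.mk (orbitsIn A Y) * Cardinal.mk (orbitsIn B Z) := by
  have hstab : ∀ z ∈ Z, MulAction.stabilizer G z ≤ B := fun z _ g hg =>
    hfree g z hg ▸ B.one_mem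
  exact orbit_intersection_relative_general hstab (injOn_doubleCosetMk_of_existsUnique hD)
end

section
/- Let G be the free product of a family of groups (G_i)_{i∈I} (the coproduct of groups, with each G_i regarded as a subgroup of G via the canonical embedding). Suppose at least two of the G_i are nontrivial, and suppose G is not the free product of exactly two groups of order 2 (i.e., G is not infinite dihedral). Then there exist elements x, y ∈ G generating a free subgroup of rank 2 such that the subgroup ⟨x, y⟩ intersects every conjugate gG_ig⁻¹ of every free factor trivially. -/
/-!
If `a` and `b` are nontrivial elements of different factors, then `⁅a, b⁆ = a b a⁻¹ b⁻¹` sends every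
reduced word that does not start with `b a` to a reduced word that starts with `a b`, and its
inverse `⁅b, a⁆` does the same with the roles exchanged. Hence `⁅a, b⁆` and `⁅a', b⁆` play ping-pong
on reduced words as soon as `a ≠ a'` both lie outside the factor of `b`; such `a`, `a'`, `b` exist
outside the infinite dihedral case. Commutators of elements of different factors die in the direct
product of the factors, whereas every conjugate of a factor embeds there.
-/

open Monoid Monoid.CoprodI
open scoped commutatorElement Function

section PingPong

universe u v

-- `FreeGroup.injective_lift_of_ping_pong` requires `τ` and `G` to lie in the same universe.
theorem injective_freeGroup_lift_of_ping_pong {τ : Type u} [Nontrivial τ] {G : Type v} [Group G]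
    {α : Type*} [MulAction G α] (a : τ → G) (X Y : τ → Set α)
    (hX_nonempty : ∀ t, (X t).Nonempty) (hX_disj : Pairwise (Disjoint on X))
    (hY_disj : Pairwise (Disjoint on Y)) (hXY_disj : ∀ s t, Disjoint (X s) (Y t))
    (hX : ∀ t, ∀ w ∉ Y t, a t • w ∈ X t) (hY : ∀ t, ∀ w ∉ X t, (a t)⁻¹ • w ∈ Y t) :
    Function.Injective (FreeGroup.lift a) := by
  let a' : ULift.{v} τ → ULift.{u} G := fun t => ULift.up (a t.down)
  have h_lift : FreeGroup.lift a =
      MulEquiv.ulift.toMonoidHom.comp ((FreeGroup.lift a').comp (FreeGroup.map ULift.up)) := by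
    ext t
    simp only [MonoidHom.comp_apply, FreeGroup.map.of, FreeGroup.lift_apply_of]
    rfl
  have h_inj : Function.Injective (FreeGroup.lift a') := by
    refine FreeGroup.injective_lift_of_ping_pong a' (X ∘ ULift.down) (Y ∘ ULift.down)
      (fun t => hX_nonempty t.down) (fun s t hst => hX_disj (ULift.down_injective.ne hst))
      (fun s t hst => hY_disj (ULift.down_injective.ne hst)) (fun s t => hXY_disj _ _) ?_ ?_
    · rintro t _ ⟨w, hw, rfl⟩
      exact hX t.down w hw
    · rintro t _ ⟨w, hw, rfl⟩
      exact hY t.down w hw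
  rw [h_lift]
  exact MulEquiv.ulift.injective.comp (h_inj.comp (FreeGroup.map_injective ULift.up_injective))

end PingPong

section Cylinders

variable {ι : Type*} {M : ι → Type*} [∀ i, Monoid (M i)]

/-- The cylinder of a list `l` of letters: the set of reduced words that start with `l`. Cylinders
are the sets on which commutators of letters play ping-pong. -/
def wordCylinder (l : List (Σ i, M i)) : Set (Word M) :=
  {w | l <+: w.toList}

theorem disjoint_wordCylinder {l l' : List (Σ i, M i)} (h_length : l.length = l'.length)
    (hne : l ≠ l') : Disjoint (wordCylinder l) (wordCylinder l') :=
  Set.disjoint_left.mpr fun _ h h' =>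
    hne ((List.prefix_of_prefix_length_le h h' h_length.le).eq_of_length h_length)

theorem fstIdx_eq_of_mem_wordCylinder_cons {x : Σ i, M i} {l : List (Σ i, M i)} {w : Word M}
    (hw : w ∈ wordCylinder (x :: l)) : w.fstIdx = some x.1 := by
  obtain ⟨l', hl'⟩ := hw
  simp [Word.fstIdx, ← hl']

variable [DecidableEq ι] [∀ i, DecidableEq (M i)]

theorem fstIdx_of_smul {i : ι} {a : M i} (ha : a ≠ 1) {w : Word M} (hw : w.fstIdx ≠ some i) :
    ((of a : CoprodI M) • w).fstIdx = some i := by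
  rw [← Word.cons_eq_smul (h1 := hw) (h2 := ha), Word.fstIdx_cons]

theorem of_smul_mem_wordCylinder_cons_iff {i : ι} {a : M i} (ha : a ≠ 1) {l : List (Σ i, M i)}
    {w : Word M} (hw : w.fstIdx ≠ some i) :
    (of a : CoprodI M) • w ∈ wordCylinder (⟨i, a⟩ :: l) ↔ w ∈ wordCylinder l := by
  rw [← Word.cons_eq_smul (h1 := hw) (h2 := ha)]
  simp [wordCylinder]

end Cylinders

section Commutators

variable {ι : Type*} {G : ι → Type*} [∀ i, Group (G i)]

theorem fstIdx_of_inv_smul [DecidableEq ι] [∀ i, DecidableEq (G i)] {i : ι} {a : G i} (ha : a ≠ 1)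
    {w : Word G} (hw : w ∉ wordCylinder [⟨i, a⟩]) :
    ((of a : CoprodI G)⁻¹ • w).fstIdx = some i := by
  rw [← map_inv]
  by_cases h : w.fstIdx = some i
  · induction w using Word.consRecOn with
    | empty => simp [Word.fstIdx, Word.empty] at h
    | cons k c w' hw' hc =>
      obtain rfl : k = i := by simpa using h
      have hca : a⁻¹ * c ≠ 1 := by
        rw [Ne, inv_mul_eq_one]
        rintro rfl
        exact hw (by simp [wordCylinder])
      rw [Word.cons_eq_smul, ← mul_smul, ← map_mul]
      exact fstIdx_of_smul hca hw'
  · exact fstIdx_of_smul (inv_ne_one.mpr ha) h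

theorem commutator_smul_mem_wordCylinder [DecidableEq ι] [∀ i, DecidableEq (G i)]
    {p q : Σ i, G i} (hpq : p.1 ≠ q.1) (hp : p.2 ≠ 1) (hq : q.2 ≠ 1) {w : Word G}
    (hw : w ∉ wordCylinder [q, p]) :
    ⁅(of p.2 : CoprodI G), of q.2⁆ • w ∈ wordCylinder [p, q] := by
  obtain ⟨i, a⟩ := p
  obtain ⟨j, b⟩ := q
  have h_binv : (of b : CoprodI G)⁻¹ • w ∉ wordCylinder [⟨i, a⟩] := by
    intro h
    have h_idx : ((of b : CoprodI G)⁻¹ • w).fstIdx ≠ some j := by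
      simpa [fstIdx_eq_of_mem_wordCylinder_cons h] using hpq
    exact hw (by simpa using (of_smul_mem_wordCylinder_cons_iff hq h_idx).mpr h)
  have h_ainv : ((of a : CoprodI G)⁻¹ • (of b : CoprodI G)⁻¹ • w).fstIdx ≠ some j := by
    simpa [fstIdx_of_inv_smul hp h_binv] using hpq
  have h_b : ((of b : CoprodI G) • (of a : CoprodI G)⁻¹ • (of b : CoprodI G)⁻¹ • w).fstIdx ≠
      some i := by
    simpa [fstIdx_of_smul hq h_ainv] using hpq.symm
  rw [commutatorElement_def, mul_smul, mul_smul, mul_smul,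
    of_smul_mem_wordCylinder_cons_iff hp h_b, of_smul_mem_wordCylinder_cons_iff hq h_ainv]
  exact List.nil_prefix

theorem injective_freeGroup_lift_commutator {τ : Type*} [Nontrivial τ] {p q : τ → Σ i, G i}
    (h_idx : ∀ t, (p t).1 ≠ (q t).1) (hp : ∀ t, (p t).2 ≠ 1) (hq : ∀ t, (q t).2 ≠ 1)
    (h_inj : Function.Injective fun t => (p t, q t)) (h_swap : ∀ s t, (p s, q s) ≠ (q t, p t)) :
    Function.Injective
      (FreeGroup.lift fun t => ⁅(of (p t).2 : CoprodI G), of (q t).2⁆) := by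
  classical
  refine injective_freeGroup_lift_of_ping_pong _ (fun t => wordCylinder [p t, q t])
    (fun t => wordCylinder [q t, p t]) (fun t => ?_)
    (fun s t hst => disjoint_wordCylinder rfl fun h => hst (h_inj ?_))
    (fun s t hst => disjoint_wordCylinder rfl fun h => hst (h_inj ?_))
    (fun s t => disjoint_wordCylinder rfl fun h => h_swap s t ?_)
    (fun t w hw => commutator_smul_mem_wordCylinder (h_idx t) (hp t) (hq t) hw) (fun t w hw => ?_)
  · have h_empty : (Word.empty : Word G) ∉ wordCylinder [q t, p t] := by simp [wordCylinder]
    exact ⟨_, commutator_smul_mem_wordCylinder (h_idx t) (hp t) (hq t) h_empty⟩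
  · simpa using h
  · simpa [and_comm] using h
  · simpa using h
  · rw [commutatorElement_inv]
    exact commutator_smul_mem_wordCylinder (h_idx t).symm (hq t) (hp t) hw

end Commutators

section CartesianSubgroup

variable {ι : Type*} [DecidableEq ι] (G : ι → Type*) [∀ i, Group (G i)]

/-- The Cartesian subgroup of a free product: the kernel of the canonical map to the direct
product of the factors. It avoids all conjugates of the factors. -/
def cartesianSubgroup : Subgroup (CoprodI G) :=
  (lift (MonoidHom.mulSingle G)).ker

variable {G}

theorem commutator_mem_cartesianSubgroup {i j : ι} (hij : i ≠ j) (a : G i) (b : G j) :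
    ⁅(of a : CoprodI G), of b⁆ ∈ cartesianSubgroup G := by
  rw [cartesianSubgroup, MonoidHom.mem_ker, map_commutatorElement, lift_of, lift_of,
    commutatorElement_eq_one_iff_commute]
  exact Pi.mulSingle_commute hij a b

theorem disjoint_cartesianSubgroup_map_conj_range_of (i : ι) (g : CoprodI G) :
    Disjoint (cartesianSubgroup G)
      ((of : G i →* CoprodI G).range.map (MulAut.conj g).toMonoidHom) := by
  rw [Subgroup.disjoint_def]
  rintro _ h_ker ⟨_, ⟨a, rfl⟩, rfl⟩
  have ha : a = 1 := by simpa [cartesianSubgroup, MonoidHom.mem_ker] using h_ker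
  simp [ha]

end CartesianSubgroup

theorem exists_nontrivial_letters_off_factor_of_not_dihedral
    {ι : Type*} {M : ι → Type*} [∀ i, One (M i)]
    (h2 : ∃ i j : ι, i ≠ j ∧ Nontrivial (M i) ∧ Nontrivial (M j))
    (hdih : ¬ ∃ i j : ι, i ≠ j ∧ Nat.card (M i) = 2 ∧ Nat.card (M j) = 2 ∧
      ∀ k : ι, k ≠ i → k ≠ j → ∀ x : M k, x = 1) :
    ∃ q : Σ i, M i, q.2 ≠ 1 ∧ {p : Σ i, M i | p.1 ≠ q.1 ∧ p.2 ≠ 1}.Nontrivial := by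
  obtain ⟨i, j, hij, hi, hj⟩ := h2
  obtain ⟨a, ha⟩ := exists_ne (1 : M i)
  obtain ⟨b, hb⟩ := exists_ne (1 : M j)
  by_contra! h_sub
  have h_unique {p p' q : Σ i, M i} (hq : q.2 ≠ 1) (hp : p.1 ≠ q.1 ∧ p.2 ≠ 1)
      (hp' : p'.1 ≠ q.1 ∧ p'.2 ≠ 1) : p = p' := h_sub q hq hp hp'
  have h_card {k l : ι} (hkl : k ≠ l) {c : M k} (hc : c ≠ 1) {d : M l} (hd : d ≠ 1) :
      Nat.card (M k) = 2 :=
    (Nat.card_eq_two_iff' 1).mpr ⟨c, hc, fun c' hc' => by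
      simpa using h_unique (p := ⟨k, c'⟩) (p' := ⟨k, c⟩) (q := ⟨l, d⟩) hd ⟨hkl, hc'⟩ ⟨hkl, hc⟩⟩
  refine hdih ⟨i, j, hij, h_card hij ha hb, h_card hij.symm hb ha, fun k hki hkj c => ?_⟩
  by_contra hc
  exact hki (congrArg Sigma.fst
    (h_unique (p := ⟨k, c⟩) (p' := ⟨i, a⟩) (q := ⟨j, b⟩) hb ⟨hkj, hc⟩ ⟨hij, ha⟩))

/-- In a free product `G = ∗_{i ∈ I} G_i` with at least two nontrivial factors, which is
not the free product of exactly two groups of order 2 (i.e. not infinite dihedral), there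
exist `x, y` generating a free subgroup of rank 2 which intersects every conjugate of
every free factor trivially. -/
theorem free_product_contains_free_subgroup_avoiding_factors
    {ι : Type*} (Gs : ι → Type*) [∀ i, Group (Gs i)]
    (h2 : ∃ i j : ι, i ≠ j ∧ Nontrivial (Gs i) ∧ Nontrivial (Gs j))
    (hdih : ¬ ∃ i j : ι, i ≠ j ∧ Nat.card (Gs i) = 2 ∧ Nat.card (Gs j) = 2 ∧
        ∀ k : ι, k ≠ i → k ≠ j → ∀ x : Gs k, x = 1) :
    ∃ x y : Monoid.CoprodI Gs,
      Function.Injective (FreeGroup.lift (fun b : Bool => if b then x else y)) ∧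
      ∀ (i : ι) (g : Monoid.CoprodI Gs),
        Subgroup.closure {x, y} ⊓
          Subgroup.map (MulAut.conj g).toMonoidHom
            (MonoidHom.range (Monoid.CoprodI.of : Gs i →* Monoid.CoprodI Gs)) = ⊥ := by
  classical
  obtain ⟨q, hq, p₁, ⟨h_idx₁, hp₁⟩, p₂, ⟨h_idx₂, hp₂⟩, hne⟩ :=
    exists_nontrivial_letters_off_factor_of_not_dihedral h2 hdih
  let p : Bool → Σ i, Gs i := fun t => if t then p₁ else p₂
  have h_idx : ∀ t, (p t).1 ≠ q.1 := by simp [p, h_idx₁, h_idx₂]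
  have hp : ∀ t, (p t).2 ≠ 1 := by simp [p, hp₁, hp₂]
  have hp_inj : Function.Injective p := by simp [p, Bool.injective_iff, hne.symm]
  refine ⟨⁅of p₁.2, of q.2⁆, ⁅of p₂.2, of q.2⁆, ?_, fun i g => ?_⟩
  · convert injective_freeGroup_lift_commutator (q := fun _ => q) h_idx hp (fun _ => hq)
      (fun s t hst => hp_inj (Prod.ext_iff.mp hst).1)
      (fun s t hst => h_idx s (congrArg (fun x => x.1.1) hst)) with t
    cases t <;> rfl
  · have h_le : Subgroup.closure {⁅of p₁.2, of q.2⁆, ⁅of p₂.2, of q.2⁆} ≤ cartesianSubgroup Gs := by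
      rw [Subgroup.closure_le, Set.pair_subset_iff]
      exact ⟨commutator_mem_cartesianSubgroup h_idx₁ _ _,
        commutator_mem_cartesianSubgroup h_idx₂ _ _⟩
    exact ((disjoint_cartesianSubgroup_map_conj_range_of i g).mono_left h_le).eq_bot
end
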